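/- arXiv:0802.0959 — 7 statements merged into one kernel-verified Lean document; each statement's English description precedes it below -/
import Mathlib

section
/- Let k be an algebraically closed field of characteristic zero, let n ≥ 4, and let f ∈ k[x_0,…,x_n] be a squarefree homogeneous polynomial of degree d whose Hessian polynomial h_f is identically zero. If the transcendence degree over k of the k-subalgebra k[f_0,…,f_n] generated by the partial derivatives f_i = ∂f/∂x_i is at most 3 (equivalently, the polar image Z(f), the closure of the image of the polar map φ_f = (f_0 : … : f_n), has dimension at most 2), then the partial derivatives f_0,…,f_n are linearly dependent over k, i.e. V(f) is a cone. -/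
open MvPolynomial

/-- The Hessian polynomial of a multivariate polynomial: the determinant of the
matrix of second partial derivatives. -/
noncomputable def hessianDet {k : Type*} [CommRing k] {m : ℕ}
    (f : MvPolynomial (Fin m) k) : MvPolynomial (Fin m) k :=
  Matrix.det (Matrix.of fun i j => pderiv i (pderiv j f))

/-!
The conormal space `N_p` of the polar image of `f` at the image of `p` is spanned by the gradients
of the relations between the partial derivatives. The polar map is constant on `p + N_p`, by
uniqueness for linear differential equations along lines, and on the span of `N_p` and `p` it only
changes by a scalar. So if `N_p ≠ N_q`, these two spans meet inside `N_p ∩ N_q`.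

If the polar image has dimension at most `2` and there are at least five variables, the general
`N_p` has dimension `a ≥ 2` and codimension at most `3`, hence two general ones meet in dimension
at least `a - 1`. A family of `a`-dimensional spaces meeting pairwise in this way either has a
common `(a - 1)`-dimensional subspace, or lies in a common `(a + 1)`-dimensional space. By Euler's
formula a vector common to all `N_p` is a linear relation between the partial derivatives. In the
other case two independent vectors of the common space give two linear forms in the partial
derivatives whose quotient is constant, which is again a linear relation.
-/

section Calculus

variable {R : Type*} [CommRing R] {σ ι : Type*}

lemma derivation_aeval_eq_sum [Fintype ι] {A : Type*} [CommRing A] [Algebra R A]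
    (D : Derivation R A A) (x : ι → A) (G : MvPolynomial ι R) :
    D (aeval x G) = ∑ i, aeval x (pderiv i G) * D (x i) := by
  classical
  induction G using MvPolynomial.induction_on with
  | C a => simp
  | add P Q hP hQ => simp [hP, hQ, add_mul, Finset.sum_add_distrib]
  | mul_X P j hP =>
    have hX (i : ι) : aeval x (pderiv i (P * X j)) * D (x i) =
        (if i = j then aeval x P * D (x j) else 0) + x j * (aeval x (pderiv i P) * D (x i)) := by
      rcases eq_or_ne i j with rfl | hij
      · simp [add_mul, mul_assoc]
      · simp [pderiv_X_of_ne hij.symm, hij, mul_assoc]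
    simp_rw [hX, Finset.sum_add_distrib, ← Finset.mul_sum, ← hP]
    simp

lemma pderiv_comm (i j : σ) (f : MvPolynomial σ R) :
    pderiv i (pderiv j f) = pderiv j (pderiv i f) := by
  classical
  have hcomm : ⁅pderiv (R := R) i, pderiv (R := R) j⁆ = 0 := by
    refine derivation_ext fun l => ?_
    rw [Derivation.commutator_apply, pderiv_X, pderiv_X, Pi.single_apply, Pi.single_apply]
    split_ifs <;> simp
  exact sub_eq_zero.1 (DFunLike.congr_fun hcomm f)

lemma dvd_aeval_sub_aeval {A : Type*} [CommRing A] [Algebra R A] {a : A} {x y : ι → A}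
    (hxy : ∀ i, a ∣ x i - y i) (Q : MvPolynomial ι R) : a ∣ aeval x Q - aeval y Q := by
  simp only [← Ideal.mem_span_singleton, ← Ideal.Quotient.eq] at hxy ⊢
  simp only [← Ideal.Quotient.mkₐ_eq_mk R, comp_aeval_apply] at hxy ⊢
  simp only [hxy]

lemma isHomogeneous_eval_smul {f : MvPolynomial σ R} {e : ℕ} (hf : f.IsHomogeneous e) (c : R)
    (p : σ → R) : eval (c • p) f = c ^ e * eval p f := by
  rw [eval_eq, eval_eq, Finset.mul_sum]
  refine Finset.sum_congr rfl fun m hm => ?_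
  have hdeg : ∑ i ∈ m.support, m i = e := by
    by_contra hne
    exact mem_support_iff.1 hm (hf.coeff_eq_zero hne)
  simp only [Pi.smul_apply, smul_eq_mul, mul_pow, Finset.prod_mul_distrib,
    Finset.prod_pow_eq_pow_sum, hdeg]
  ring

/-- The restriction of a polynomial to the line `T ↦ p + T v`, as a polynomial in `T`. -/
noncomputable def restrictLine (p v : σ → R) : MvPolynomial σ R →ₐ[R] Polynomial R :=
  aeval fun i => Polynomial.C (p i) + Polynomial.C (v i) * Polynomial.X

lemma eval_restrictLine (p v : σ → R) (Q : MvPolynomial σ R) (t : R) :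
    (restrictLine p v Q).eval t = eval (p + t • v) Q := by
  rw [← Polynomial.coe_aeval_eq_eval, restrictLine, comp_aeval_apply, ← aeval_eq_eval]
  congr 2
  ext i
  simp [mul_comm t]

lemma derivative_restrictLine [Fintype σ] (p v : σ → R) (Q : MvPolynomial σ R) :
    Polynomial.derivative (restrictLine p v Q) =
      ∑ i, Polynomial.C (v i) * restrictLine p v (pderiv i Q) := by
  rw [restrictLine, ← Polynomial.derivative'_apply, derivation_aeval_eq_sum]
  refine Finset.sum_congr rfl fun i _ => ?_
  rw [mul_comm]
  simp

end Calculus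

section Nonvanishing

variable {R : Type*} [CommRing R] [IsDomain R] [Infinite R] {σ : Type*}

lemma exists_eval_ne_zero {Q : MvPolynomial σ R} (hQ : Q ≠ 0) : ∃ p, eval p Q ≠ 0 := by
  by_contra! hzero
  exact hQ (MvPolynomial.funext fun p => by simp [hzero p])

lemma eq_zero_of_eval_eq_zero_of_ne {Δ Q : MvPolynomial σ R} (hΔ : Δ ≠ 0)
    (hQ : ∀ p, eval p Δ ≠ 0 → eval p Q = 0) : Q = 0 := by
  by_contra hne
  obtain ⟨p, hp⟩ := exists_eval_ne_zero (mul_ne_zero hΔ hne)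
  rw [map_mul] at hp
  exact right_ne_zero_of_mul hp (hQ p (left_ne_zero_of_mul hp))

end Nonvanishing

section CharZero

variable {k : Type*} [Field k] [CharZero k] {σ ι : Type*}

/- The formal analogue of uniqueness for linear differential equations: each step of the bootstrap
raises the order of vanishing at `0` by one. -/
lemma eq_zero_of_X_pow_dvd_derivative {u : ι → Polynomial k} (hu : ∀ i, (u i).eval 0 = 0)
    (hderiv : ∀ m, (∀ i, Polynomial.X ^ m ∣ u i) →
      ∀ i, Polynomial.X ^ m ∣ Polynomial.derivative (u i)) : u = 0 := by
  have hdvd (m : ℕ) : ∀ i, Polynomial.X ^ m ∣ u i := by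
    induction m with
    | zero => simp
    | succ m ih =>
      intro i
      rw [Polynomial.X_pow_dvd_iff]
      rintro (_ | l) hl
      · rw [Polynomial.coeff_zero_eq_eval_zero, hu]
      · have hcoeff := Polynomial.X_pow_dvd_iff.1 (hderiv m ih i) l (by omega)
        rw [Polynomial.coeff_derivative] at hcoeff
        exact (mul_eq_zero.1 hcoeff).resolve_right (by exact_mod_cast l.succ_ne_zero)
  ext i l
  exact Polynomial.X_pow_dvd_iff.1 (hdvd (l + 1) i) l l.lt_succ_self

lemma eq_zero_of_pderiv_mul_eq [Finite σ] {g h : MvPolynomial σ k} {p : σ → k}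
    (hgh : ∀ u, pderiv u g * h = g * pderiv u h) (hg : eval p g = 0) (hh : eval p h ≠ 0) :
    g = 0 := by
  cases nonempty_fintype σ
  refine MvPolynomial.funext fun q => ?_
  let ρ := restrictLine p (q - p)
  have hρ : Polynomial.derivative (ρ g) * ρ h = ρ g * Polynomial.derivative (ρ h) := by
    simp only [ρ, derivative_restrictLine, Finset.sum_mul, Finset.mul_sum]
    refine Finset.sum_congr rfl fun u _ => ?_
    rw [mul_assoc, ← map_mul, hgh, map_mul, mul_left_comm]
  have hX : ¬ Polynomial.X ∣ ρ h := by
    simpa [ρ, Polynomial.X_dvd_iff, Polynomial.coeff_zero_eq_eval_zero, eval_restrictLine] using hh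
  have hρg : (fun _ : Unit => ρ g) = 0 := by
    refine eq_zero_of_X_pow_dvd_derivative (fun _ => by simpa [ρ, eval_restrictLine] using hg)
      fun m hm _ => Polynomial.prime_X.pow_dvd_of_dvd_mul_right m hX ?_
    rw [hρ]
    exact (hm ()).mul_right _
  have heval := eval_restrictLine p (q - p) g 1
  rw [show restrictLine p (q - p) g = 0 from congrFun hρg ()] at heval
  simpa using heval.symm

lemma not_linearIndependent_pair_of_pderiv_mul_eq [Finite σ] {g h : MvPolynomial σ k}
    (hgh : ∀ u, pderiv u g * h = g * pderiv u h) : ¬ LinearIndependent k ![g, h] := by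
  intro hlin
  have hh : h ≠ 0 := hlin.ne_zero 1
  obtain ⟨p, hp⟩ := exists_eval_ne_zero hh
  have hcomb : eval p h • g - eval p g • h = 0 := by
    refine eq_zero_of_pderiv_mul_eq (h := h) (p := p) (fun u => ?_) ?_ hp
    · simp only [map_sub, Derivation.map_smul, sub_mul, smul_mul_assoc, hgh u, mul_comm h]
    · simp [smul_eval, mul_comm]
  rw [sub_eq_add_neg, ← neg_smul] at hcomb
  exact hp (LinearIndependent.pair_iff.1 hlin _ _ hcomb).1

lemma pderiv_eq_zero_iff_notMem_vars {G : MvPolynomial σ k} {j : σ} :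
    pderiv j G = 0 ↔ j ∉ G.vars := by
  classical
  refine ⟨fun hG hj => ?_, pderiv_eq_zero_of_notMem_vars⟩
  obtain ⟨m, hm, hmj⟩ := (mem_vars_iff_mem_support j).1 hj
  have hle : Finsupp.single j 1 ≤ m := by
    rw [Finsupp.single_le_iff, Nat.one_le_iff_ne_zero]
    exact Finsupp.mem_support_iff.1 hmj
  have hcoeff := coeff_pderiv (i := j) G (m - Finsupp.single j 1)
  rw [hG, coeff_zero, tsub_add_cancel_of_le hle] at hcoeff
  exact mul_ne_zero (mem_support_iff.1 hm) (Nat.cast_add_one_ne_zero _) hcoeff.symm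

lemma vars_pderiv_subset (j : σ) (G : MvPolynomial σ k) : (pderiv j G).vars ⊆ G.vars := by
  intro i
  contrapose!
  simp only [← pderiv_eq_zero_iff_notMem_vars]
  intro hi
  rw [pderiv_comm, hi, map_zero]

end CharZero

lemma totalDegree_pderiv_lt {R : Type*} [CommSemiring R] {σ : Type*} {G : MvPolynomial σ R} {j : σ}
    (hG : pderiv j G ≠ 0) : (pderiv j G).totalDegree < G.totalDegree := by
  classical
  obtain ⟨m, hm, hdeg⟩ := Finset.exists_mem_eq_sup _ (support_nonempty.2 hG)
    (fun s => s.sum fun _ e => e)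
  rw [mem_support_iff, coeff_pderiv] at hm
  have hle : (m + Finsupp.single j 1).degree ≤ G.totalDegree :=
    le_totalDegree (mem_support_iff.2 (left_ne_zero_of_mul hm))
  rw [map_add, Finsupp.degree_single] at hle
  exact hdeg.trans_lt hle

section LinearAlgebra

variable {K V : Type*} [Field K] [AddCommGroup V] [Module K V] [FiniteDimensional K V]

lemma exists_smul_add_smul_mem {M E : Submodule K V} (hME : M ≤ E)
    (hdim : Module.finrank K E ≤ Module.finrank K M + 1) {x y : V} (hx : x ∈ E) (hy : y ∈ E) :
    ∃ α β : K, (α ≠ 0 ∨ β ≠ 0) ∧ α • x + β • y ∈ M := by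
  by_cases hxM : x ∈ M
  · exact ⟨1, 0, by simp, by simpa using hxM⟩
  have hE : M ⊔ K ∙ x = E := by
    refine Submodule.eq_of_le_of_finrank_le
      (sup_le hME ((Submodule.span_singleton_le_iff_mem _ _).2 hx)) ?_
    rwa [Submodule.finrank_sup_span_singleton hxM]
  rw [← hE] at hy
  obtain ⟨w, hw, z, hz, rfl⟩ := Submodule.mem_sup.1 hy
  obtain ⟨c, rfl⟩ := Submodule.mem_span_singleton.1 hz
  exact ⟨-c, 1, by simp, by simpa using hw⟩

lemma finrank_inf_lt_of_ne {A B : Submodule K V} (hAB : A ≠ B)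
    (hdim : Module.finrank K A = Module.finrank K B) :
    Module.finrank K (A ⊓ B : Submodule K V) < Module.finrank K A := by
  refine Submodule.finrank_lt_finrank_of_lt (lt_of_le_of_ne inf_le_left fun h => hAB ?_)
  exact Submodule.eq_of_le_of_finrank_eq (inf_eq_left.1 h) hdim

lemma inf_le_or_le_sup_of_finrank_le_inf_add_one {A B C : Submodule K V} (hAB : A ≠ B)
    (hdim : Module.finrank K A = Module.finrank K B)
    (hAC : Module.finrank K A ≤ Module.finrank K C)
    (hCA : Module.finrank K C ≤ Module.finrank K (C ⊓ A : Submodule K V) + 1)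
    (hCB : Module.finrank K C ≤ Module.finrank K (C ⊓ B : Submodule K V) + 1) :
    A ⊓ B ≤ C ∨ C ≤ A ⊔ B := by
  have hlt := finrank_inf_lt_of_ne hAB hdim
  by_cases hle : C ⊓ A ≤ C ⊓ B
  · left
    have hCAB : C ⊓ A = A ⊓ B :=
      Submodule.eq_of_le_of_finrank_le (le_inf inf_le_right (hle.trans inf_le_right)) (by omega)
    exact hCAB ▸ inf_le_left
  · right
    have hsup : C ⊓ A ⊔ C ⊓ B = C := by
      refine Submodule.eq_of_le_of_finrank_le (sup_le inf_le_left inf_le_left) ?_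
      have := Submodule.finrank_lt_finrank_of_lt (right_lt_sup.2 hle)
      omega
    rw [← hsup]
    exact sup_le_sup inf_le_right inf_le_right

lemma le_sup_of_inf_le_of_not_inf_le {A B C D : Submodule K V} (hAC : ¬ A ⊓ B ≤ C)
    (hC : C ≤ A ⊔ B) (hAD : A ⊓ B ≤ D)
    (hDC : Module.finrank K D ≤ Module.finrank K (D ⊓ C : Submodule K V) + 1) : D ≤ A ⊔ B := by
  by_contra hD
  have hlt := Submodule.finrank_lt_finrank_of_lt (inf_lt_left.2 hD)
  have hDCeq : D ⊓ C = D ⊓ (A ⊔ B) :=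
    Submodule.eq_of_le_of_finrank_le (inf_le_inf_left _ hC) (by omega)
  have hle : A ⊓ B ≤ D ⊓ C := hDCeq ▸ le_inf hAD (inf_le_left.trans le_sup_left)
  exact hAC (hle.trans inf_le_right)

theorem finrank_le_iInf_add_one_or_finrank_iSup_le {ι : Type*} {N : ι → Submodule K V} {a : ℕ}
    (hdim : ∀ p, Module.finrank K (N p) = a)
    (hinf : ∀ p q, a ≤ Module.finrank K (N p ⊓ N q : Submodule K V) + 1) :
    a ≤ Module.finrank K (⨅ p, N p : Submodule K V) + 1 ∨
      Module.finrank K (⨆ p, N p : Submodule K V) ≤ a + 1 := by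
  by_cases hconst : ∀ p q, N p = N q
  · right
    rcases isEmpty_or_nonempty ι with _ | ⟨⟨p⟩⟩
    · rw [iSup_of_empty, finrank_bot]
      exact Nat.zero_le _
    · have : ⨆ q, N q ≤ N p := iSup_le fun q => (hconst q p).le
      exact (Submodule.finrank_mono this).trans (by rw [hdim]; omega)
  push Not at hconst
  obtain ⟨p, q, hpq⟩ := hconst
  have htriangle (r : ι) : N p ⊓ N q ≤ N r ∨ N r ≤ N p ⊔ N q :=
    inf_le_or_le_sup_of_finrank_le_inf_add_one hpq (by simp only [hdim]) (by simp [hdim])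
      (by rw [hdim]; exact hinf r p) (by rw [hdim]; exact hinf r q)
  by_cases hall : ∀ r, N p ⊓ N q ≤ N r
  · exact .inl ((hinf p q).trans (Nat.add_le_add_right (Submodule.finrank_mono (le_iInf hall)) 1))
  push Not at hall
  obtain ⟨r, hr⟩ := hall
  right
  have hsup : ⨆ s, N s ≤ N p ⊔ N q := iSup_le fun s => (htriangle s).elim
    (fun hs => le_sup_of_inf_le_of_not_inf_le hr ((htriangle r).resolve_left hr) hs
      (by rw [hdim]; exact hinf s r)) id
  have hmono := Submodule.finrank_mono hsup
  have hsum := Submodule.finrank_sup_add_finrank_inf_eq (N p) (N q)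
  have := hinf p q
  simp only [hdim] at hsum
  omega

end LinearAlgebra

section Semicontinuity

variable {k : Type*} [Field k] {σ ι κ : Type*}

lemma exists_mul_eq_one_of_linearIndependent_row [Fintype ι] [Finite κ] [DecidableEq κ]
    {W : Matrix κ ι k} (hW : LinearIndependent k W.row) : ∃ B : Matrix ι κ k, W * B = 1 := by
  cases nonempty_fintype κ
  have hrange : LinearMap.range W.mulVecLin = ⊤ := by
    refine Submodule.eq_top_of_finrank_eq ?_
    rw [Module.finrank_fintype_fun_eq_card]
    exact hW.rank_matrix
  exact Matrix.mulVec_surjective_iff_exists_right_inverse.1 (LinearMap.range_eq_top.1 hrange)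

lemma exists_linearIndependent_row_of_eval_ne_zero [Finite ι] [Finite κ]
    {W : Matrix κ ι (MvPolynomial σ k)} {p₀ : σ → k}
    (hW : LinearIndependent k (W.map (eval p₀)).row) :
    ∃ Δ : MvPolynomial σ k, eval p₀ Δ ≠ 0 ∧
      ∀ p, eval p Δ ≠ 0 → LinearIndependent k (W.map (eval p)).row := by
  classical
  cases nonempty_fintype ι
  cases nonempty_fintype κ
  obtain ⟨B, hB⟩ := exists_mul_eq_one_of_linearIndependent_row hW
  have hdet (p : σ → k) : eval p (W * B.map (C (σ := σ))).det = (W.map (eval p) * B).det := by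
    rw [RingHom.map_det, RingHom.mapMatrix_apply, Matrix.map_mul, Matrix.map_map]
    congr 2
    ext
    simp
  refine ⟨(W * B.map (C (σ := σ))).det, by simp [hdet, hB], fun p hp => ?_⟩
  rw [hdet] at hp
  rw [← Matrix.vecMul_injective_iff, ← Matrix.coe_vecMulLinear, injective_iff_map_eq_zero]
  intro c hc
  rw [Matrix.vecMulLinear_apply] at hc
  refine Matrix.eq_zero_of_vecMul_eq_zero hp ?_
  rw [← Matrix.vecMul_vecMul, hc, Matrix.zero_vecMul]

end Semicontinuity

section ConormalSpace

variable {k : Type*} [Field k] {σ ι κ : Type*}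

/-- The polynomial map `k^σ → k^ι` with coordinates `F`. -/
noncomputable def evalMap (F : ι → MvPolynomial σ k) (p : σ → k) : ι → k :=
  fun i => eval p (F i)

/-- The conormal space at `F(p)` of the closure of the image of the polynomial map `F`: the
gradients at `F(p)` of the polynomial relations satisfied by `F`. -/
noncomputable def conormalSpace (F : ι → MvPolynomial σ k) (p : σ → k) : Submodule k (ι → k) :=
  (LinearMap.ker (aeval F).toLinearMap).map
    (LinearMap.pi fun i => (aeval (evalMap F p)).toLinearMap ∘ₗ (pderiv i).toLinearMap)

variable {F : ι → MvPolynomial σ k} {p q : σ → k} {v : ι → k} {e : ℕ}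

lemma eval_aeval_eq_eval_evalMap (F : ι → MvPolynomial σ k) (p : σ → k) (G : MvPolynomial ι k) :
    eval p (aeval F G) = eval (evalMap F p) G := by
  rw [← aeval_eq_eval, comp_aeval_apply, aeval_eq_eval, aeval_eq_eval]
  rfl

lemma mem_conormalSpace :
    v ∈ conormalSpace F p ↔
      ∃ G : MvPolynomial ι k, aeval F G = 0 ∧ ∀ i, eval p (aeval F (pderiv i G)) = v i := by
  simp only [eval_aeval_eq_eval_evalMap, ← aeval_eq_eval]
  simp [conormalSpace, funext_iff]

lemma conormalSpace_congr (hpq : evalMap F p = evalMap F q) :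
    conormalSpace F p = conormalSpace F q := by
  rw [conormalSpace, hpq, conormalSpace]

lemma card_le_finrank_conormalSpace [Finite ι] [Fintype κ] {G : κ → MvPolynomial ι k}
    (hG : ∀ l, aeval F (G l) = 0)
    (hlin : LinearIndependent k fun l i => eval p (aeval F (pderiv i (G l)))) :
    Fintype.card κ ≤ Module.finrank k (conormalSpace F p) := by
  have hmem (l : κ) : (fun i => eval p (aeval F (pderiv i (G l)))) ∈ conormalSpace F p :=
    mem_conormalSpace.2 ⟨G l, hG l, fun _ => rfl⟩
  let w (l : κ) : conormalSpace F p := ⟨_, hmem l⟩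
  have hw : LinearIndependent k w := .of_comp (conormalSpace F p).subtype hlin
  exact hw.fintype_card_le_finrank

lemma exists_finrank_conormalSpace_le [Finite ι] (F : ι → MvPolynomial σ k) (p₀ : σ → k) :
    ∃ Δ : MvPolynomial σ k, eval p₀ Δ ≠ 0 ∧ ∀ p, eval p Δ ≠ 0 →
      Module.finrank k (conormalSpace F p₀) ≤ Module.finrank k (conormalSpace F p) := by
  let b := Module.finBasis k (conormalSpace F p₀)
  choose G hG hGb using fun l => mem_conormalSpace.1 (b l).2
  let W : Matrix _ ι (MvPolynomial σ k) := .of fun l i => aeval F (pderiv i (G l))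
  have hW : LinearIndependent k (W.map (eval p₀)).row := by
    have hrow : (W.map (eval p₀)).row = (conormalSpace F p₀).subtype ∘ b := by
      ext l i
      exact hGb l i
    rw [hrow]
    exact b.linearIndependent.map' _ (Submodule.ker_subtype _)
  obtain ⟨Δ, hΔ, hlin⟩ := exists_linearIndependent_row_of_eval_ne_zero hW
  exact ⟨Δ, hΔ, fun p hp => by simpa using card_le_finrank_conormalSpace hG (hlin p hp)⟩

theorem exists_forall_finrank_conormalSpace_le [Finite ι] (F : ι → MvPolynomial σ k) :
    ∃ Δ : MvPolynomial σ k, Δ ≠ 0 ∧ ∀ p q, eval q Δ ≠ 0 →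
      Module.finrank k (conormalSpace F p) ≤ Module.finrank k (conormalSpace F q) := by
  cases nonempty_fintype ι
  have hbdd : BddAbove (Set.range fun p => Module.finrank k (conormalSpace F p)) := by
    refine ⟨Fintype.card ι, ?_⟩
    rintro _ ⟨p, rfl⟩
    simpa using (conormalSpace F p).finrank_le
  obtain ⟨p₀, hp₀⟩ := Nat.sSup_mem (Set.range_nonempty _) hbdd
  obtain ⟨Δ, hΔ, hgen⟩ := exists_finrank_conormalSpace_le F p₀
  refine ⟨Δ, fun h => hΔ (by simp [h]), fun p q hq => le_trans ?_ (hgen q hq)⟩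
  exact (le_csSup hbdd ⟨p, rfl⟩).trans_eq hp₀.symm

lemma eval_pderiv_linearCombination_eq_zero [Fintype ι] (hv : v ∈ conormalSpace F p)
    (u : σ) : eval p (pderiv u (Fintype.linearCombination k F v)) = 0 := by
  obtain ⟨G, hG, hGv⟩ := mem_conormalSpace.1 hv
  have hchain := congrArg (eval p) (derivation_aeval_eq_sum (pderiv u) F G)
  simp only [hG, map_zero, map_sum, map_mul, hGv] at hchain
  simpa [Fintype.linearCombination_apply, smul_eval] using hchain.symm

lemma eval_linearCombination_eq_zero [CharZero k] [Finite σ] [Fintype ι]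
    (hF : ∀ i, (F i).IsHomogeneous e) (he : e ≠ 0) (hv : v ∈ conormalSpace F p) :
    eval p (Fintype.linearCombination k F v) = 0 := by
  cases nonempty_fintype σ
  have hhom : (Fintype.linearCombination k F v).IsHomogeneous e := by
    rw [Fintype.linearCombination_apply]
    exact .sum _ _ _ fun i _ => (homogeneousSubmodule σ k e).smul_mem (v i) (hF i)
  have heuler := congrArg (eval p) hhom.sum_X_mul_pderiv
  simpa [eval_pderiv_linearCombination_eq_zero hv, he] using heuler

lemma evalMap_smul (hF : ∀ i, (F i).IsHomogeneous e) (c : k) (p : σ → k) :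
    evalMap F (c • p) = c ^ e • evalMap F p :=
  funext fun i => isHomogeneous_eval_smul (hF i) c p

lemma conormalSpace_smul_le [Infinite k] [Finite ι] (hF : ∀ i, (F i).IsHomogeneous e) {c : k}
    (hc : c ≠ 0) (p : σ → k) : conormalSpace F (c • p) ≤ conormalSpace F p := by
  classical
  cases nonempty_fintype ι
  intro v hv
  obtain ⟨G, hG, hGv⟩ := mem_conormalSpace.1 hv
  let s : ι → MvPolynomial ι k := fun j => C (c ^ e) * X j
  have hs (q : σ → k) (Q : MvPolynomial ι k) :
      eval q (aeval F (aeval s Q)) = eval (c • q) (aeval F Q) := by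
    simp only [eval_aeval_eq_eval_evalMap, evalMap_smul hF]
    congr 2
    ext j
    simp [s, evalMap]
  refine ((conormalSpace F p).smul_mem_iff (pow_ne_zero e hc)).1
    (mem_conormalSpace.2 ⟨aeval s G, MvPolynomial.funext fun q => ?_, fun i => ?_⟩)
  · rw [hs, hG, map_zero, map_zero]
  · have hderiv : pderiv i (aeval s G) = aeval s (pderiv i G) * C (c ^ e) := by
      rw [derivation_aeval_eq_sum, Finset.sum_eq_single i]
      · simp [s]
      · intro j _ hj
        simp [s, pderiv_X_of_ne hj]
      · simp
    rw [hderiv, map_mul, map_mul, hs, hGv, algHom_C, algebraMap_eq, eval_C, mul_comm]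
    rfl

lemma conormalSpace_smul [Infinite k] [Finite ι] (hF : ∀ i, (F i).IsHomogeneous e) {c : k}
    (hc : c ≠ 0) (p : σ → k) : conormalSpace F (c • p) = conormalSpace F p := by
  refine (conormalSpace_smul_le hF hc p).antisymm ?_
  simpa [hc] using conormalSpace_smul_le hF (inv_ne_zero hc) (c • p)

end ConormalSpace

section TranscendenceDegree

variable {k : Type*} [Field k] {σ ι : Type*}

/- A nonzero relation of least degree works, since its partial derivatives have smaller degree. -/
lemma exists_aeval_eq_zero_and_aeval_pderiv_ne_zero [CharZero k] {A : Type*}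
    [CommRing A] [Algebra k A] {x : ι → A} {S : Set ι} {j : ι} (hS : AlgebraicIndepOn k x S)
    (hj : ¬ AlgebraicIndepOn k x (insert j S)) :
    ∃ G ∈ supported k (insert j S), aeval x G = 0 ∧ aeval x (pderiv j G) ≠ 0 := by
  replace hS := algebraicIndependent_comp_subtype.1 hS
  replace hj := mt algebraicIndependent_comp_subtype.2 hj
  push Not at hj
  obtain ⟨G, ⟨hGS, hG, hG0⟩, hmin⟩ := exists_minimalFor_of_wellFoundedLT
    (fun G => G ∈ supported k (insert j S) ∧ aeval x G = 0 ∧ G ≠ 0) totalDegree hj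
  rw [mem_supported] at hGS
  refine ⟨G, mem_supported.2 hGS, hG, fun hGj => ?_⟩
  by_cases hjG : pderiv j G = 0
  · refine hG0 (hS G ?_ hG)
    rw [mem_supported]
    intro i hi
    refine (hGS hi).resolve_left ?_
    rintro rfl
    exact pderiv_eq_zero_iff_notMem_vars.1 hjG hi
  · have hvars : ((pderiv j G).vars : Set ι) ⊆ insert j S :=
      (Finset.coe_subset.2 (vars_pderiv_subset j G)).trans hGS
    have hlt := totalDegree_pderiv_lt hjG
    exact hlt.not_ge (hmin ⟨mem_supported.2 hvars, hGj, hjG⟩ hlt.le)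

lemma linearIndependent_of_diagonal {κ : Type*} [Finite κ] {w : κ → ι → k} (j : κ → ι)
    (hdiag : ∀ l, w l (j l) ≠ 0) (hoff : ∀ l m, l ≠ m → w l (j m) = 0) :
    LinearIndependent k w := by
  cases nonempty_fintype κ
  rw [Fintype.linearIndependent_iff]
  intro c hc m
  have hm := congrFun hc (j m)
  rw [Finset.sum_apply, Finset.sum_eq_single m (fun l _ hl => by simp [hoff l m hl])
    (by simp)] at hm
  exact (mul_eq_zero.1 hm).resolve_right (hdiag m)

theorem exists_card_le_finrank_conormalSpace_add_ncard [CharZero k] [Fintype ι]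
    (F : ι → MvPolynomial σ k) :
    ∃ S : Set ι, AlgebraicIndepOn k F S ∧
      ∃ p, Fintype.card ι ≤ Module.finrank k (conormalSpace F p) + S.ncard := by
  classical
  obtain ⟨S, hS⟩ := (Set.toFinite {S | AlgebraicIndepOn k F S}).exists_maximal
    ⟨∅, algebraicIndependent_empty_type⟩
  have hrel (j : ↥Sᶜ) : ∃ G ∈ supported k (insert j.1 S), aeval F G = 0 ∧
      aeval F (pderiv j.1 G) ≠ 0 :=
    exists_aeval_eq_zero_and_aeval_pderiv_ne_zero hS.prop fun hj =>
      j.2 (hS.le_of_ge hj (Set.subset_insert _ _) (Set.mem_insert _ _))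
  choose G hGS hG hGj using hrel
  have hprod : ∏ j, aeval F (pderiv j.1 (G j)) ≠ 0 := Finset.prod_ne_zero_iff.2 fun j _ => hGj j
  obtain ⟨p, hp⟩ := exists_eval_ne_zero hprod
  rw [map_prod, Finset.prod_ne_zero_iff] at hp
  refine ⟨S, hS.prop, p, ?_⟩
  have hlin : LinearIndependent k fun j i => eval p (aeval F (pderiv i (G j))) := by
    refine linearIndependent_of_diagonal Subtype.val (fun j => hp j (Finset.mem_univ _))
      fun l m hlm => ?_
    have hm : m.1 ∉ (G l).vars := fun hmem =>
      (mem_supported.1 (hGS l) hmem).elim (fun h => hlm (Subtype.ext h.symm)) m.2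
    rw [pderiv_eq_zero_of_notMem_vars hm, map_zero, map_zero]
  have hcard := card_le_finrank_conormalSpace hG hlin
  have hcompl := Set.ncard_add_ncard_compl S
  rw [← Nat.card_eq_fintype_card, Nat.card_coe_set_eq] at hcard
  rw [← Nat.card_eq_fintype_card]
  omega

lemma ncard_lt_of_forall_not_algebraicIndependent {R A : Type*} [CommRing R] [CommRing A]
    [Algebra R A] [Finite ι] {x : ι → A} {r : ℕ}
    (hx : ∀ s : Fin r → A, (∀ i, s i ∈ Algebra.adjoin R (Set.range x)) →
      ¬ AlgebraicIndependent R s) {S : Set ι} (hS : AlgebraicIndepOn R x S) : S.ncard < r := by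
  have := Fintype.ofFinite S
  by_contra! hr
  obtain ⟨φ⟩ : Nonempty (Fin r ↪ S) := Function.Embedding.nonempty_of_card_le
    (by rwa [Fintype.card_fin, ← Nat.card_eq_fintype_card, Nat.card_coe_set_eq])
  exact hx _ (fun i => Algebra.subset_adjoin ⟨_, rfl⟩) (hS.comp φ φ.injective)

end TranscendenceDegree

section Dependence

variable {k : Type*} [Field k] [CharZero k] {σ ι : Type*} [Finite σ] [Finite ι]
  {F : ι → MvPolynomial σ k} {e : ℕ} {Δ : MvPolynomial σ k}

lemma not_linearIndependent_of_mem_conormalSpace (hF : ∀ i, (F i).IsHomogeneous e) (he : e ≠ 0)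
    (hΔ : Δ ≠ 0) {v : ι → k} (hv : v ≠ 0) (hmem : ∀ p, eval p Δ ≠ 0 → v ∈ conormalSpace F p) :
    ¬ LinearIndependent k F := by
  cases nonempty_fintype ι
  intro hlin
  have hzero : Fintype.linearCombination k F v = 0 :=
    eq_zero_of_eval_eq_zero_of_ne hΔ fun p hp => eval_linearCombination_eq_zero hF he (hmem p hp)
  exact hv (hlin.fintypeLinearCombination_injective (hzero.trans (map_zero _).symm))

/- The linear forms `g` and `h` in the `F i` given by two independent vectors of `E` satisfy, at a
general point, a common linear relation to first order, so `g / h` is constant. -/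
lemma not_linearIndependent_of_conormalSpace_le (hF : ∀ i, (F i).IsHomogeneous e) (he : e ≠ 0)
    (hΔ : Δ ≠ 0) {E : Submodule k (ι → k)} (hE : 1 < Module.finrank k E)
    (hle : ∀ p, eval p Δ ≠ 0 → conormalSpace F p ≤ E)
    (hdim : ∀ p, eval p Δ ≠ 0 →
      Module.finrank k E ≤ Module.finrank k (conormalSpace F p) + 1) :
    ¬ LinearIndependent k F := by
  cases nonempty_fintype ι
  intro hlin
  have := Module.nontrivial_of_finrank_pos (R := k) (M := E) (by omega)
  obtain ⟨x, hx⟩ := exists_ne (0 : E)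
  obtain ⟨y, hxy⟩ := exists_linearIndependent_pair_of_one_lt_finrank hE hx
  let L : E →ₗ[k] MvPolynomial σ k := Fintype.linearCombination k F ∘ₗ E.subtype
  have hL : Function.Injective L :=
    hlin.fintypeLinearCombination_injective.comp E.injective_subtype
  refine not_linearIndependent_pair_of_pderiv_mul_eq (g := L x) (h := L y) (fun u => ?_) ?_
  · rw [← sub_eq_zero]
    refine eq_zero_of_eval_eq_zero_of_ne hΔ fun p hp => ?_
    obtain ⟨α, β, hαβ, hmem⟩ := exists_smul_add_smul_mem (hle p hp) (hdim p hp) x.2 y.2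
    have hval : α * eval p (L x) + β * eval p (L y) = 0 := by
      simpa [L, smul_eval] using eval_linearCombination_eq_zero hF he hmem
    have hderiv : α * eval p (pderiv u (L x)) + β * eval p (pderiv u (L y)) = 0 := by
      simpa [L, smul_eval] using eval_pderiv_linearCombination_eq_zero hmem u
    rw [map_sub, map_mul, map_mul]
    rcases hαβ with hα | hβ
    · refine mul_left_cancel₀ hα ?_
      linear_combination eval p (L y) * hderiv - eval p (pderiv u (L y)) * hval
    · refine mul_left_cancel₀ hβ ?_
      linear_combination eval p (pderiv u (L x)) * hval - eval p (L x) * hderiv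
  · rw [LinearIndependent.pair_iff] at hxy ⊢
    exact fun s t hst => hxy s t (hL (by simpa using hst))

end Dependence

section PolarMap

variable {k : Type*} [Field k] {σ : Type*}

/-- The coordinates of the polar map of `f`. -/
noncomputable def polarMap (f : MvPolynomial σ k) : σ → MvPolynomial σ k :=
  fun i => pderiv i f

/-- The linear span of the conormal space of the polar image of `f` at the image of `p` and of `p`
itself. For general `p` it is the affine cone over the closure of the fibre of the polar map
through `p`. -/
noncomputable def polarFiber (f : MvPolynomial σ k) (p : σ → k) : Submodule k (σ → k) :=
  conormalSpace (polarMap f) p ⊔ k ∙ p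

variable {f : MvPolynomial σ k} {p q v x : σ → k} {e : ℕ}

lemma mem_polarFiber :
    x ∈ polarFiber f p ↔ ∃ c : k, ∃ v ∈ conormalSpace (polarMap f) p, c • p + v = x := by
  rw [polarFiber, sup_comm, Submodule.mem_sup]
  simp [Submodule.mem_span_singleton]

variable [CharZero k]

section Finite

variable [Finite σ]

/- Along the line `p + T v` the derivative of the gradient is that of the relation `G` defining `v`,
up to the difference between `v` and the gradient of `G` at the moving point, which vanishes to the
same order as the increment of the gradient. -/
lemma evalMap_polarMap_add (hv : v ∈ conormalSpace (polarMap f) p) :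
    evalMap (polarMap f) (p + v) = evalMap (polarMap f) p := by
  cases nonempty_fintype σ
  obtain ⟨G, hG, hGv⟩ := mem_conormalSpace.1 hv
  let ρ := restrictLine p v
  let u (i : σ) : Polynomial k := ρ (pderiv i f) - Polynomial.C (eval p (pderiv i f))
  have hrel (j : σ) :
      ∑ i, ρ (aeval (polarMap f) (pderiv i G)) * ρ (pderiv i (pderiv j f)) = 0 := by
    have hchain := derivation_aeval_eq_sum (pderiv j) (polarMap f) G
    rw [hG, map_zero] at hchain
    simpa [polarMap, pderiv_comm j] using (congrArg ρ hchain).symm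
  have hderiv (j : σ) : Polynomial.derivative (u j) =
      ∑ i, (Polynomial.C (v i) - ρ (aeval (polarMap f) (pderiv i G))) *
        ρ (pderiv i (pderiv j f)) := by
    simp only [u, ρ, Polynomial.derivative_sub, Polynomial.derivative_C, sub_zero,
      derivative_restrictLine, sub_mul, Finset.sum_sub_distrib]
    exact (sub_eq_self.2 (hrel j)).symm
  have hu : u = 0 := by
    refine eq_zero_of_X_pow_dvd_derivative (fun i => by simp [u, ρ, eval_restrictLine])
      fun m hm j => ?_
    rw [hderiv]
    refine Finset.dvd_sum fun i _ => Dvd.dvd.mul_right ?_ _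
    have hC : Polynomial.C (v i) =
        aeval (fun l => Polynomial.C (eval p (pderiv l f))) (pderiv i G) := by
      rw [← hGv, eval_aeval_eq_eval_evalMap, ← aeval_eq_eval]
      exact (aeval_algebraMap_apply _ _ _).symm
    rw [dvd_sub_comm, hC, comp_aeval_apply]
    exact dvd_aeval_sub_aeval hm _
  ext i
  have heval := eval_restrictLine p v (pderiv i f) 1
  rw [sub_eq_zero.1 (congrFun hu i), Polynomial.eval_C, one_smul] at heval
  exact heval.symm

lemma evalMap_polarMap_smul_add (hf : ∀ i, (polarMap f i).IsHomogeneous e)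
    (hv : v ∈ conormalSpace (polarMap f) p) (c : k) :
    evalMap (polarMap f) (c • p + v) = c ^ e • evalMap (polarMap f) p := by
  have hne {t : k} (ht : t ≠ 0) :
      evalMap (polarMap f) (t • p + v) = t ^ e • evalMap (polarMap f) p := by
    rw [← conormalSpace_smul hf ht] at hv
    rw [evalMap_polarMap_add hv, evalMap_smul hf]
  ext i
  have hpoly : restrictLine v p (polarMap f i) =
      Polynomial.C (eval p (polarMap f i)) * Polynomial.X ^ e := by
    refine Polynomial.eq_of_infinite_eval_eq _ _
      ((Set.finite_singleton (0 : k)).infinite_compl.mono fun t ht => ?_)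
    rw [Set.mem_ofPred_eq, eval_restrictLine, add_comm, Polynomial.eval_mul, Polynomial.eval_C,
      Polynomial.eval_pow, Polynomial.eval_X, mul_comm]
    exact congrFun (hne ht) i
  have heval := eval_restrictLine v p (polarMap f i) c
  rw [hpoly, add_comm, Polynomial.eval_mul, Polynomial.eval_C, Polynomial.eval_pow,
    Polynomial.eval_X, mul_comm] at heval
  exact heval.symm

lemma mem_conormalSpace_of_mem_polarFiber (hf : ∀ i, (polarMap f i).IsHomogeneous e)
    (hp : evalMap (polarMap f) p ≠ 0) (hx : x ∈ polarFiber f p)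
    (hx0 : evalMap (polarMap f) x = 0) : x ∈ conormalSpace (polarMap f) p := by
  obtain ⟨c, v, hv, rfl⟩ := mem_polarFiber.1 hx
  rw [evalMap_polarMap_smul_add hf hv, smul_eq_zero_iff_left hp] at hx0
  rwa [eq_zero_of_pow_eq_zero hx0, zero_smul, zero_add]

lemma evalMap_polarMap_eq_zero (hf : ∀ i, (polarMap f i).IsHomogeneous e) (he : e ≠ 0)
    (hv : v ∈ conormalSpace (polarMap f) p) : evalMap (polarMap f) v = 0 := by
  simpa [he] using evalMap_polarMap_smul_add hf hv 0

lemma conormalSpace_eq_of_mem_polarFiber (hf : ∀ i, (polarMap f i).IsHomogeneous e) (he : e ≠ 0)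
    (hx : x ∈ polarFiber f p) (hx0 : evalMap (polarMap f) x ≠ 0) :
    conormalSpace (polarMap f) x = conormalSpace (polarMap f) p := by
  obtain ⟨c, v, hv, rfl⟩ := mem_polarFiber.1 hx
  have hc : c ≠ 0 := by
    rintro rfl
    exact hx0 (by simpa using evalMap_polarMap_eq_zero hf he hv)
  rw [← conormalSpace_smul hf hc p]
  exact conormalSpace_congr (by rw [evalMap_polarMap_smul_add hf hv, evalMap_smul hf])

lemma polarFiber_inf_le (hf : ∀ i, (polarMap f i).IsHomogeneous e) (he : e ≠ 0)
    (hp : evalMap (polarMap f) p ≠ 0) (hq : evalMap (polarMap f) q ≠ 0)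
    (hpq : conormalSpace (polarMap f) p ≠ conormalSpace (polarMap f) q) :
    polarFiber f p ⊓ polarFiber f q ≤
      conormalSpace (polarMap f) p ⊓ conormalSpace (polarMap f) q := by
  rintro x ⟨hxp, hxq⟩
  have hx0 : evalMap (polarMap f) x = 0 := by
    by_contra hx0
    exact hpq ((conormalSpace_eq_of_mem_polarFiber hf he hxp hx0).symm.trans
      (conormalSpace_eq_of_mem_polarFiber hf he hxq hx0))
  exact ⟨mem_conormalSpace_of_mem_polarFiber hf hp hxp hx0,
    mem_conormalSpace_of_mem_polarFiber hf hq hxq hx0⟩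

lemma finrank_polarFiber (hf : ∀ i, (polarMap f i).IsHomogeneous e) (he : e ≠ 0)
    (hp : evalMap (polarMap f) p ≠ 0) :
    Module.finrank k (polarFiber f p) = Module.finrank k (conormalSpace (polarMap f) p) + 1 :=
  Submodule.finrank_sup_span_singleton fun hmem => hp (evalMap_polarMap_eq_zero hf he hmem)

end Finite

theorem finrank_conormalSpace_add_finrank_conormalSpace_le [Fintype σ]
    (hf : ∀ i, (polarMap f i).IsHomogeneous e) (he : e ≠ 0)
    (hp : evalMap (polarMap f) p ≠ 0) (hq : evalMap (polarMap f) q ≠ 0)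
    (hpq : conormalSpace (polarMap f) p ≠ conormalSpace (polarMap f) q) :
    Module.finrank k (conormalSpace (polarMap f) p) +
        Module.finrank k (conormalSpace (polarMap f) q) + 2 ≤
      Fintype.card σ + Module.finrank k
        (conormalSpace (polarMap f) p ⊓ conormalSpace (polarMap f) q : Submodule k (σ → k)) := by
  have hsum := Submodule.finrank_sup_add_finrank_inf_eq (polarFiber f p) (polarFiber f q)
  have hsup := (polarFiber f p ⊔ polarFiber f q).finrank_le
  have hinf := Submodule.finrank_mono (polarFiber_inf_le hf he hp hq hpq)
  rw [finrank_polarFiber hf he hp, finrank_polarFiber hf he hq] at hsum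
  rw [Module.finrank_fintype_fun_eq_card] at hsup
  omega

lemma finrank_conormalSpace_le_finrank_inf_add_one [Fintype σ]
    (hf : ∀ i, (polarMap f i).IsHomogeneous e) (he : e ≠ 0)
    (hp : evalMap (polarMap f) p ≠ 0) (hq : evalMap (polarMap f) q ≠ 0)
    (hpq : Module.finrank k (conormalSpace (polarMap f) p) =
      Module.finrank k (conormalSpace (polarMap f) q))
    (hcard : Fintype.card σ ≤ Module.finrank k (conormalSpace (polarMap f) p) + 3) :
    Module.finrank k (conormalSpace (polarMap f) p) ≤ Module.finrank k
      (conormalSpace (polarMap f) p ⊓ conormalSpace (polarMap f) q : Submodule k (σ → k)) + 1 := by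
  rcases eq_or_ne (conormalSpace (polarMap f) p) (conormalSpace (polarMap f) q) with heq | hne
  · rw [heq, inf_idem]
    exact Nat.le_succ _
  · have := finrank_conormalSpace_add_finrank_conormalSpace_le hf he hp hq hne
    omega

end PolarMap

section Cone

variable {k : Type*} [Field k] [CharZero k] {σ : Type*}

lemma not_linearIndependent_of_isHomogeneous_zero [Finite σ] {ι : Type*} [Nontrivial ι]
    {F : ι → MvPolynomial σ k} (hF : ∀ i, (F i).IsHomogeneous 0) : ¬ LinearIndependent k F := by
  have hzero (i : ι) (u : σ) : pderiv u (F i) = 0 := by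
    have hdeg := (totalDegree_zero_iff_isHomogeneous σ).2 (hF i)
    rw [totalDegree_eq_zero_iff_eq_C.1 hdeg, pderiv_C]
  obtain ⟨i, j, hij⟩ := exists_pair_ne ι
  intro hlin
  refine not_linearIndependent_pair_of_pderiv_mul_eq (g := F i) (h := F j) (by simp [hzero]) ?_
  exact LinearIndependent.pair_iff.2 ((LinearIndepOn.pair_iff F hij).1 (hlin.linearIndepOn _))

theorem not_linearIndependent_of_card_le [Fintype σ] {f : MvPolynomial σ k} {e : ℕ}
    (hf : ∀ i, (polarMap f i).IsHomogeneous e) (he : e ≠ 0) (hcard : 5 ≤ Fintype.card σ)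
    (hdim : ∃ p, Fintype.card σ ≤ Module.finrank k (conormalSpace (polarMap f) p) + 3) :
    ¬ LinearIndependent k (polarMap f) := by
  intro hlin
  obtain ⟨i⟩ : Nonempty σ := Fintype.card_pos_iff.1 (by omega)
  obtain ⟨Δ, hΔ, hgen⟩ := exists_forall_finrank_conormalSpace_le (polarMap f)
  have hΔi : Δ * polarMap f i ≠ 0 := mul_ne_zero hΔ (hlin.ne_zero i)
  let N (p : {p // eval p (Δ * polarMap f i) ≠ 0}) := conormalSpace (polarMap f) p
  have hΔp (p) (hp : eval p (Δ * polarMap f i) ≠ 0) : eval p Δ ≠ 0 :=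
    left_ne_zero_of_mul (map_mul (eval p) Δ _ ▸ hp)
  have hpolar (p) (hp : eval p (Δ * polarMap f i) ≠ 0) : evalMap (polarMap f) p ≠ 0 :=
    fun h => hp (by rw [map_mul, show eval p (polarMap f i) = 0 from congrFun h i, mul_zero])
  obtain ⟨p₀, hp₀⟩ := exists_eval_ne_zero hΔi
  set a := Module.finrank k (conormalSpace (polarMap f) p₀)
  have hN (p) : Module.finrank k (N p) = a :=
    (hgen p p₀ (hΔp p₀ hp₀)).antisymm (hgen p₀ p (hΔp p p.2))
  obtain ⟨q, hq⟩ := hdim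
  have haq := hgen q p₀ (hΔp p₀ hp₀)
  have hinf (p q) : a ≤ Module.finrank k (N p ⊓ N q : Submodule k (σ → k)) + 1 :=
    (hN p).symm.trans_le (finrank_conormalSpace_le_finrank_inf_add_one hf he (hpolar p p.2)
      (hpolar q q.2) ((hN p).trans (hN q).symm) (by have := hN p; simp only [N] at this; omega))
  rcases finrank_le_iInf_add_one_or_finrank_iSup_le hN hinf with hiInf | hiSup
  · obtain ⟨v, hv, hv0⟩ := Submodule.exists_mem_ne_zero_of_ne_bot
      (Submodule.one_le_finrank_iff.1 (by omega : 1 ≤ Module.finrank k (⨅ p, N p :)))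
    exact not_linearIndependent_of_mem_conormalSpace hf he hΔi hv0
      (fun p hp => iInf_le N ⟨p, hp⟩ hv) hlin
  · have hE := Submodule.finrank_mono (le_iSup N ⟨p₀, hp₀⟩)
    exact not_linearIndependent_of_conormalSpace_le hf he hΔi
      (E := iSup N) (by rw [hN] at hE; omega) (fun p hp => le_iSup N ⟨p, hp⟩)
      (fun p hp => hiSup.trans_eq (by rw [← hN ⟨p, hp⟩])) hlin

theorem stmt4_general [Fintype σ] (hcard : 5 ≤ Fintype.card σ) {f : MvPolynomial σ k} {d : ℕ}
    (hhom : f.IsHomogeneous d)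
    (htr : ∀ s : Fin 4 → MvPolynomial σ k,
      (∀ i, s i ∈ Algebra.adjoin k (Set.range fun j => pderiv j f)) →
      ¬ AlgebraicIndependent k s) :
    ¬ LinearIndependent k fun i => pderiv i f := by
  have hf (i : σ) : (polarMap f i).IsHomogeneous (d - 1) := hhom.pderiv
  rcases eq_or_ne (d - 1) 0 with he | he
  · have : Nontrivial σ := Fintype.one_lt_card_iff_nontrivial.1 (by omega)
    exact not_linearIndependent_of_isHomogeneous_zero (he ▸ hf)
  · obtain ⟨S, hS, p, hp⟩ := exists_card_le_finrank_conormalSpace_add_ncard (polarMap f)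
    have hS4 := ncard_lt_of_forall_not_algebraicIndependent htr hS
    exact not_linearIndependent_of_card_le hf he hcard ⟨p, by omega⟩

end Cone

/-- If a squarefree homogeneous polynomial `f` in `n+1 ≥ 5` variables has vanishing
Hessian and the `k`-subalgebra generated by its partial derivatives has transcendence
degree at most `3` over `k` (i.e. any four of its elements are algebraically dependent;
geometrically `dim Z(f) ≤ 2`), then the partial derivatives of `f` are linearly
dependent over `k`, i.e. `V(f)` is a cone. -/
theorem stmt4 {k : Type*} [Field k] [IsAlgClosed k] [CharZero k]
    (n d : ℕ) (hn : 4 ≤ n)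
    (f : MvPolynomial (Fin (n + 1)) k)
    (hsf : Squarefree f) (hhom : f.IsHomogeneous d)
    (hhess : hessianDet f = 0)
    (htr : ∀ s : Fin 4 → MvPolynomial (Fin (n + 1)) k,
      (∀ i, s i ∈ Algebra.adjoin k (Set.range fun j => pderiv j f)) →
      ¬ AlgebraicIndependent k s) :
    ∃ c : Fin (n + 1) → k, c ≠ 0 ∧ ∑ i, c i • pderiv i f = 0 := by
  obtain ⟨c, hc, i, hi⟩ := Fintype.not_linearIndependent_iff.1
    (stmt4_general (by simpa using hn) hhom htr)
  exact ⟨c, fun h => hi (congrFun h i), hc⟩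
end

section
/- Let k be a field of characteristic zero and let h_0,…,h_n ∈ k[x_0,…,x_n] be polynomials satisfying Σ_{i=0}^n h_i·(∂h_j/∂x_i) = 0 for every j = 0,…,n. Then for any polynomial F ∈ k[x_0,…,x_n] the following are equivalent: (i) Σ_{i=0}^n h_i·(∂F/∂x_i) = 0; (ii) for every λ ∈ k, the polynomial obtained from F by substituting x_i ↦ x_i + λ·h_i(x_0,…,x_n) for each i equals F, i.e. F(x + λ·h(x)) = F(x) as an identity of polynomials. -/
open MvPolynomial

/-!
Write `D = ∑ i, hᵢ ∂ᵢ` and expand `F(x + T h(x))` in powers of a new variable `T`. The relations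
`D hⱼ = 0` say that `∂/∂T` and `D` (acting on coefficients) agree on the generators `xⱼ + T hⱼ`,
hence on every `F(x + T h(x))`. Comparing coefficients gives `F(x + T h(x)) = ∑ Tᵐ Dᵐ F / m!`, which
is constant in `T` exactly when `D F = 0`; and a polynomial in `T` vanishing at all natural
numbers is zero, since its `d`-th difference, `d` its degree, is `d!` times its leading coefficient.
-/

theorem polynomial_eq_zero_of_forall_eval_natCast_eq_zero {A : Type*} [CommRing A]
    [IsAddTorsionFree A] (p : Polynomial A) (hp : ∀ m : ℕ, p.eval (m : A) = 0) : p = 0 := by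
  have hdiff : (fwdDiff (1 : A))^[p.natDegree] (fun x => p.eval x) 0 = 0 := by
    rw [fwdDiff_iter_eq_sum_shift]
    exact Finset.sum_eq_zero fun m _ => by simp [hp]
  have hlead : p.natDegree.factorial • p.leadingCoeff = 0 := by
    rw [p.fwdDiff_iter_degree_eq_factorial] at hdiff
    simpa [mul_comm] using hdiff
  exact Polynomial.leadingCoeff_eq_zero.1 <|
    (nsmul_eq_zero_iff_right p.natDegree.factorial_ne_zero).1 hlead

instance isAddTorsionFree_mvPolynomial {σ R : Type*} [CommSemiring R] [IsAddTorsionFree R] :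
    IsAddTorsionFree (MvPolynomial σ R) where
  nsmul_right_injective m hm p q hpq := by
    ext s
    exact nsmul_right_injective hm (by simpa only [coeff_smul] using congrArg (coeff s) hpq)

section LineExpansion

variable {σ R : Type*} [CommRing R] (h : σ → MvPolynomial σ R)

theorem sum_mul_pderiv_eq_mkDerivation [Fintype σ] (F : MvPolynomial σ R) :
    ∑ i, h i * pderiv i F = mkDerivation R h F := by
  classical
  have hsum (G : MvPolynomial σ R) : (∑ i, h i • pderiv i) G = ∑ i, h i * pderiv i G := by
    rw [← Derivation.coeFnAddMonoidHom_apply]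
    simp
  have hD : ∑ i, h i • pderiv i = mkDerivation R h :=
    derivation_ext fun j => by simp [hsum, pderiv_X, Pi.single_apply]
  rw [← hsum, hD]

/-- The expansion of `F(x + T h(x))` as a polynomial in the variable `T`, which is `Polynomial.X`,
with coefficients in the ring of polynomials in `x`. -/
noncomputable def lineExpansion : MvPolynomial σ R →ₐ[R] Polynomial (MvPolynomial σ R) :=
  aeval fun i => Polynomial.C (X i) + Polynomial.C (h i) * Polynomial.X

theorem lineExpansion_X (i : σ) :
    lineExpansion h (X i) = Polynomial.C (X i) + Polynomial.C (h i) * Polynomial.X :=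
  aeval_X _ i

theorem eval_C_lineExpansion (a : R) (F : MvPolynomial σ R) :
    (lineExpansion h F).eval (C a) = aeval (fun i => X i + C a * h i) F := by
  have hcomp : ((Polynomial.aeval (C a : MvPolynomial σ R)).restrictScalars R).comp
      (lineExpansion h) = aeval fun i => X i + C a * h i :=
    algHom_ext fun i => by simp [lineExpansion_X, mul_comm (C a)]
  simpa [Polynomial.coe_aeval_eq_eval] using DFunLike.congr_fun hcomp F

theorem coeff_zero_lineExpansion (F : MvPolynomial σ R) : (lineExpansion h F).coeff 0 = F := by
  simpa [Polynomial.coeff_zero_eq_eval_zero] using eval_C_lineExpansion h 0 F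

variable {h}

theorem mapCoeffs_mkDerivation_lineExpansion (hh : ∀ j, mkDerivation R h (h j) = 0)
    (F : MvPolynomial σ R) :
    PolynomialModule.equivPolynomialSelf ((mkDerivation R h).mapCoeffs (lineExpansion h F)) =
      Polynomial.derivative (lineExpansion h F) := by
  induction F using MvPolynomial.induction_on with
  | C a =>
    have hC : lineExpansion h (C a) = algebraMap R _ a := aeval_C _ a
    simp [hC]
  | add p q hp hq => simp only [map_add, hp, hq]
  | mul_X p j hp =>
    have hgen : PolynomialModule.equivPolynomialSelf
        ((mkDerivation R h).mapCoeffs (lineExpansion h (X j))) =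
          Polynomial.derivative (lineExpansion h (X j)) := by
      simp [lineExpansion_X, hh]
    simp only [map_mul, Derivation.leibniz, map_add, map_smul, hp, hgen, smul_eq_mul,
      Polynomial.derivative_mul]
    ring

theorem succ_nsmul_coeff_succ_lineExpansion (hh : ∀ j, mkDerivation R h (h j) = 0)
    (F : MvPolynomial σ R) (m : ℕ) :
    (m + 1) • (lineExpansion h F).coeff (m + 1) =
      mkDerivation R h ((lineExpansion h F).coeff m) := by
  have hm := congrArg (Polynomial.coeff · m) (mapCoeffs_mkDerivation_lineExpansion hh F)
  rw [Polynomial.coeff_derivative] at hm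
  rw [nsmul_eq_mul, mul_comm]
  push_cast
  exact hm.symm

theorem factorial_nsmul_coeff_lineExpansion (hh : ∀ j, mkDerivation R h (h j) = 0)
    (F : MvPolynomial σ R) (m : ℕ) :
    m.factorial • (lineExpansion h F).coeff m = (mkDerivation R h)^[m] F := by
  induction m with
  | zero => simp [coeff_zero_lineExpansion]
  | succ m ih =>
    rw [Function.iterate_succ_apply', ← ih, map_nsmul, ← succ_nsmul_coeff_succ_lineExpansion hh,
      Nat.factorial_succ, mul_comm, mul_nsmul']

theorem lineExpansion_eq_C_iff [IsAddTorsionFree R] (hh : ∀ j, mkDerivation R h (h j) = 0)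
    (F : MvPolynomial σ R) :
    lineExpansion h F = Polynomial.C F ↔ mkDerivation R h F = 0 := by
  have hcoeff := factorial_nsmul_coeff_lineExpansion hh F
  constructor
  · intro hconst
    simpa [hconst] using (hcoeff 1).symm
  · intro hF
    ext1 m
    cases m with
    | zero => simp [coeff_zero_lineExpansion]
    | succ m =>
      have hzero : (m + 1).factorial • (lineExpansion h F).coeff (m + 1) = 0 := by
        rw [hcoeff, Function.iterate_succ_apply, hF, iterate_map_zero]
      rw [Polynomial.coeff_C_succ]
      exact (nsmul_eq_zero_iff_right (m + 1).factorial_ne_zero).1 hzero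

theorem lineExpansion_eq_C_iff_forall_aeval_eq [IsAddTorsionFree R] (F : MvPolynomial σ R) :
    lineExpansion h F = Polynomial.C F ↔ ∀ a : R, aeval (fun i => X i + C a * h i) F = F := by
  simp only [← eval_C_lineExpansion]
  refine ⟨fun hconst a => by simp [hconst], fun heval => sub_eq_zero.1 ?_⟩
  refine polynomial_eq_zero_of_forall_eval_natCast_eq_zero _ fun m => ?_
  simpa [sub_eq_zero] using heval m

theorem stmt5_general [IsAddTorsionFree R] (hh : ∀ j, mkDerivation R h (h j) = 0)
    (F : MvPolynomial σ R) :
    mkDerivation R h F = 0 ↔ ∀ a : R, aeval (fun i => X i + C a * h i) F = F :=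
  (lineExpansion_eq_C_iff hh F).symm.trans (lineExpansion_eq_C_iff_forall_aeval_eq F)

end LineExpansion

/-- The fundamental lemma of Gordan and Noether: if `h₀, …, hₙ` satisfy
`∑ i, hᵢ · ∂hⱼ/∂xᵢ = 0` for all `j`, then for any polynomial `F` one has
`∑ i, hᵢ · ∂F/∂xᵢ = 0` iff `F(x + λ·h(x)) = F(x)` for every `λ ∈ k`. -/
theorem stmt5 {k : Type*} [Field k] [CharZero k] (n : ℕ)
    (h : Fin (n + 1) → MvPolynomial (Fin (n + 1)) k)
    (hrel : ∀ j, ∑ i, h i * pderiv i (h j) = 0)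
    (F : MvPolynomial (Fin (n + 1)) k) :
    (∑ i, h i * pderiv i F = 0) ↔
      ∀ lam : k, aeval (fun i => X i + C lam * h i) F = F := by
  simp only [sum_mul_pderiv_eq_mkDerivation] at hrel ⊢
  exact stmt5_general hrel F
end

section
/- Let k be a field of characteristic zero and let h_0,…,h_n ∈ k[x_0,…,x_n] satisfy Σ_{i=0}^n h_i·(∂h_j/∂x_i) = 0 for every j = 0,…,n. If F ∈ k[x_0,…,x_n] is a nonzero homogeneous polynomial of degree e ≥ 1 with Σ_{i=0}^n h_i·(∂F/∂x_i) = 0, then the composition F(h_0,…,h_n), obtained by substituting h_i for x_i in F, is the zero polynomial. -/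
open MvPolynomial

/-!
Let `D = ∑ i, hᵢ · ∂/∂xᵢ`. The hypotheses say that `D² xᵢ = D hᵢ = 0` and `D F = 0`. By the Leibniz
rule, `D ^ e` maps a product of `e` elements killed by `D²` to `e!` times the product of their
derivatives, so `D ^ e F = e! · F(h)` for `F` homogeneous of degree `e`. Since `e ≥ 1`, the left
side vanishes. Here `D ^ e F / e!` is the coefficient of `λ ^ e` in the Taylor expansion of
`F(x + λ h)`.
-/

open scoped Nat

section Derivation

variable {R A : Type*} [CommSemiring R] [CommSemiring A] [Algebra R A] (D : Derivation R A A)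

theorem derivation_iterate_succ_mul {a : A} (ha : D (D a) = 0) (p : A) (m : ℕ) :
    D^[m + 1] (a * p) = a * D^[m + 1] p + (m + 1) • (D a * D^[m] p) := by
  induction m with
  | zero => simp [mul_comm]
  | succ m ih =>
    rw [Function.iterate_succ_apply', ih, map_add, D.map_smul_of_tower, D.leibniz, D.leibniz, ha,
      ← Function.iterate_succ_apply' D, ← Function.iterate_succ_apply' D]
    simp only [smul_eq_mul, nsmul_eq_mul, Nat.succ_eq_add_one]
    push_cast
    ring

theorem derivation_multiset_prod_eq_zero {s : Multiset A} (hs : ∀ a ∈ s, D a = 0) :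
    D s.prod = 0 :=
  Multiset.prod_induction (D · = 0) s (fun a b ha hb => by simp [ha, hb]) D.map_one_eq_zero hs

variable {ι : Type*} {x : ι → A}

theorem derivation_iterate_card_multiset_prod (hx : ∀ i, D (D (x i)) = 0) (s : Multiset ι) :
    D^[s.card] (s.map x).prod = s.card ! • (s.map fun i => D (x i)).prod := by
  induction s using Multiset.induction_on with
  | empty => simp
  | cons i s ih =>
    have next_eq_zero : D^[s.card + 1] (s.map x).prod = 0 := by
      rw [Function.iterate_succ_apply', ih, D.map_smul_of_tower,
        derivation_multiset_prod_eq_zero D (by simp [hx]), smul_zero]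
    rw [Multiset.map_cons, Multiset.map_cons, Multiset.prod_cons, Multiset.prod_cons,
      Multiset.card_cons, derivation_iterate_succ_mul D (hx i), next_eq_zero, ih, mul_zero,
      zero_add, mul_smul_comm, smul_smul, Nat.factorial_succ]

theorem derivation_iterate_aeval_monomial (hx : ∀ i, D (D (x i)) = 0) (d : ι →₀ ℕ) (r : R) :
    D^[d.degree] (aeval x (monomial d r)) =
      d.degree ! • aeval (fun i => D (x i)) (monomial d r) := by
  have aeval_eq (y : ι → A) :
      aeval y (monomial d r) = r • (d.toMultiset.map y).prod := by
    rw [aeval_monomial, ← Algebra.smul_def, Finsupp.toMultiset_map, Finsupp.prod_toMultiset,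
      Finsupp.prod_mapDomain_index (by simp) (by simp [pow_add])]
  have card_eq : d.toMultiset.card = d.degree := Finsupp.card_toMultiset d
  have iterate_smul (n : ℕ) (a : A) : D^[n] (r • a) = r • D^[n] a :=
    Function.Commute.iterate_left (D.map_smul r) n a
  rw [aeval_eq, aeval_eq, iterate_smul, ← card_eq,
    derivation_iterate_card_multiset_prod D hx, smul_comm]

theorem derivation_iterate_aeval_of_isHomogeneous (hx : ∀ i, D (D (x i)) = 0)
    {F : MvPolynomial ι R} {e : ℕ} (hF : F.IsHomogeneous e) :
    D^[e] (aeval x F) = e ! • aeval (fun i => D (x i)) F := by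
  have degree_eq (d) (hd : d ∈ F.support) : d.degree = e := by
    rw [Finsupp.degree_eq_weight_one]
    exact hF (mem_support_iff.1 hd)
  rw [← Derivation.coeFn_coe, ← Module.End.pow_apply, F.as_sum, map_sum, map_sum, map_sum,
    Finset.smul_sum]
  refine Finset.sum_congr rfl fun d hd => ?_
  rw [Module.End.pow_apply, Derivation.coeFn_coe, ← degree_eq d hd,
    derivation_iterate_aeval_monomial D hx]

end Derivation

theorem mkDerivation_eq_sum_pderiv_smul {R σ M : Type*} [CommSemiring R] [Fintype σ]
    [AddCommMonoid M] [Module R M] [Module (MvPolynomial σ R) M]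
    [IsScalarTower R (MvPolynomial σ R) M] (f : σ → M) (p : MvPolynomial σ R) :
    mkDerivation R f p = ∑ i, pderiv i p • f i := by
  classical
  induction p using MvPolynomial.induction_on with
  | C a => simp
  | add p q hp hq => simp [hp, hq, add_smul, Finset.sum_add_distrib]
  | mul_X p j hp =>
    simp [hp, pderiv_X, Pi.single_apply, add_smul, mul_smul, Finset.sum_add_distrib,
      Finset.smul_sum]

theorem stmt8_general {R σ : Type*} [CommSemiring R] [Fintype σ] (h : σ → MvPolynomial σ R)
    (hrel : ∀ j, ∑ i, h i * pderiv i (h j) = 0) (F : MvPolynomial σ R) (e : ℕ) (he : 1 ≤ e)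
    (hFhom : F.IsHomogeneous e) (hFrel : ∑ i, h i * pderiv i F = 0) :
    e ! • aeval h F = 0 := by
  let D := mkDerivation R h
  have D_apply (p) : D p = ∑ i, h i * pderiv i p := by
    simp only [D, mkDerivation_eq_sum_pderiv_smul, smul_eq_mul, mul_comm]
  have D_X (i) : D (X i) = h i := mkDerivation_X R h i
  have D_D_X (i) : D (D (X i)) = 0 := by rw [D_X, D_apply, hrel]
  have D_F : D F = 0 := by rw [D_apply, hFrel]
  obtain ⟨m, rfl⟩ := Nat.exists_eq_add_of_le' he
  calc (m + 1)! • aeval h F = D^[m + 1] F := by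
        simpa only [D_X, aeval_X_left_apply] using
          (derivation_iterate_aeval_of_isHomogeneous D D_D_X hFhom).symm
    _ = 0 := by rw [Function.iterate_succ_apply, D_F, iterate_map_zero]

/-- If `h₀, …, hₙ` satisfy `∑ i, hᵢ · ∂hⱼ/∂xᵢ = 0` for all `j`, and `F` is a nonzero
homogeneous polynomial of degree `e ≥ 1` with `∑ i, hᵢ · ∂F/∂xᵢ = 0`, then the
composition `F(h₀, …, hₙ)` is the zero polynomial. -/
theorem stmt8 {k : Type*} [Field k] [CharZero k] (n : ℕ)
    (h : Fin (n + 1) → MvPolynomial (Fin (n + 1)) k)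
    (hrel : ∀ j, ∑ i, h i * pderiv i (h j) = 0)
    (F : MvPolynomial (Fin (n + 1)) k) (e : ℕ) (he : 1 ≤ e)
    (hF0 : F ≠ 0) (hFhom : F.IsHomogeneous e)
    (hFrel : ∑ i, h i * pderiv i F = 0) :
    aeval h F = 0 := by
  exact (smul_eq_zero.1 (stmt8_general h hrel F e he hFhom hFrel)).resolve_left
    (Nat.factorial_ne_zero e)
end

section
/- Let k be a field of characteristic zero and let h_0,…,h_n ∈ k[x_0,…,x_n] satisfy Σ_{i=0}^n h_i·(∂h_j/∂x_i) = 0 for every j = 0,…,n. Then for every j = 0,…,n and every λ ∈ k, the polynomial obtained from h_j by substituting x_i ↦ x_i + λ·h_i(x_0,…,x_n) equals h_j; that is, h_j(x + λ·h(x)) = h_j(x) as polynomial identities. In particular, for every point p ∈ k^{n+1} and every λ ∈ k one has h_j(p + λ·(h_0(p),…,h_n(p))) = h_j(p), so each fiber of the map h = (h_0,…,h_n) over a point q is a cone through q. -/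
open MvPolynomial

/-!
Let `D = ∑ i, hᵢ · ∂/∂xᵢ`, so that the hypothesis reads `D hⱼ = 0`, and consider `f(x + T·h(x))` as
a polynomial in `T` over `k[x]`. Since `D xᵢ = hᵢ` and `D hᵢ = 0`, differentiating it in `T` amounts
to applying `D` to its coefficients `c₀ = f, c₁, c₂, …`; that is, `(m + 1) · cₘ₊₁ = D cₘ`
(formally, `f(x + T·h(x)) = exp(T·D) f`). Hence if `D f = 0`, all coefficients but `c₀` vanish in
characteristic zero.
-/

theorem derivation_aeval_eq_of_eq_on_generators {R A M σ : Type*} [CommSemiring R]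
    [CommSemiring A] [Algebra R A] [AddCommMonoid M] [Module A M] [Module R M]
    {D₁ D₂ : Derivation R A M} {g : σ → A} (hg : ∀ i, D₁ (g i) = D₂ (g i))
    (f : MvPolynomial σ R) : D₁ (aeval g f) = D₂ (aeval g f) := by
  have hmem : aeval g f ∈ Algebra.adjoin R (Set.range g) := by
    rw [Algebra.adjoin_range_eq_range_aeval]
    exact ⟨f, rfl⟩
  exact Derivation.eqOn_adjoin (Set.forall_mem_range.2 hg) hmem

theorem eq_C_of_coeff_derivative_eq {A : Type*} [Semiring A] [IsAddTorsionFree A]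
    {d : A → A} (hd : d 0 = 0) {p : Polynomial A}
    (hp : ∀ m, p.derivative.coeff m = d (p.coeff m)) (hp₀ : d (p.coeff 0) = 0) :
    p = Polynomial.C (p.coeff 0) := by
  have hcoeff : ∀ m, d (p.coeff m) = 0 := by
    intro m
    induction m with
    | zero => exact hp₀
    | succ m ih =>
      have hsmul : (m + 1) • p.coeff (m + 1) = 0 := by
        rw [nsmul_eq_mul', Nat.cast_succ, ← Polynomial.coeff_derivative, hp, ih]
      rw [(smul_eq_zero.1 hsmul).resolve_left m.succ_ne_zero, hd]
  apply Polynomial.eq_C_of_derivative_eq_zero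
  ext m
  rw [hp, hcoeff, Polynomial.coeff_zero]

instance mvPolynomial_isAddTorsionFree {R σ : Type*} [CommSemiring R] [IsAddTorsionFree R] :
    IsAddTorsionFree (MvPolynomial σ R) :=
  Function.Injective.isAddTorsionFree
    (AddMonoidAlgebra.coeffAddEquiv : MvPolynomial σ R ≃+ ((σ →₀ ℕ) →₀ R)).toAddMonoidHom
    AddMonoidAlgebra.coeffAddEquiv.injective

theorem mkDerivation_apply_eq_sum {R σ : Type*} [CommSemiring R] [Fintype σ]
    (h : σ → MvPolynomial σ R) (f : MvPolynomial σ R) :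
    mkDerivation R h f = ∑ i, h i * pderiv i f := by
  classical
  have sum_apply (g : MvPolynomial σ R) :
      (∑ i, h i • pderiv i) g = ∑ i, h i * pderiv i g :=
    (congr_fun (map_sum Derivation.coeFnAddMonoidHom (fun i => h i • pderiv i) _) g).trans (by simp)
  have hsum : mkDerivation R h = ∑ i, h i • pderiv i := by
    ext1 j
    simp [sum_apply, pderiv_X, Pi.single_apply]
  rw [hsum, sum_apply]

theorem eval_aeval_eq_eval {R σ τ : Type*} [CommSemiring R] (p : τ → R)
    (g : σ → MvPolynomial τ R) (f : MvPolynomial σ R) :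
    eval p (aeval g f) = eval (fun i => eval p (g i)) f :=
  eval₂Hom_bind₁ (RingHom.id R) p g f

section SubstAlong

variable {R σ : Type*}

/-- `substAlong h f` is `f(x + T·h(x))`: the restriction of `f` to the line through the generic
point `x` in the direction `h(x)`, as a polynomial in the parameter `T` of the line. -/
noncomputable def substAlong [CommSemiring R] (h : σ → MvPolynomial σ R) :
    MvPolynomial σ R →ₐ[R] Polynomial (MvPolynomial σ R) :=
  aeval fun i => Polynomial.C (X i) + Polynomial.X * Polynomial.C (h i)

theorem eval_substAlong [CommSemiring R] (h : σ → MvPolynomial σ R) (c f : MvPolynomial σ R) :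
    (substAlong h f).eval c = aeval (fun i => X i + c * h i) f := by
  have hcomp : ((Polynomial.aeval c).restrictScalars R).comp (substAlong h) =
      aeval fun i => X i + c * h i := by
    ext1 i
    simp [substAlong, mul_comm c]
  simpa [Polynomial.coe_aeval_eq_eval] using DFunLike.congr_fun hcomp f

theorem coeff_zero_substAlong [CommSemiring R] (h : σ → MvPolynomial σ R)
    (f : MvPolynomial σ R) : (substAlong h f).coeff 0 = f := by
  simp [Polynomial.coeff_zero_eq_eval_zero, eval_substAlong]

theorem coeff_derivative_substAlong [CommRing R] {h : σ → MvPolynomial σ R}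
    (hh : ∀ j, mkDerivation R h (h j) = 0) (f : MvPolynomial σ R) (m : ℕ) :
    (substAlong h f).derivative.coeff m = mkDerivation R h ((substAlong h f).coeff m) := by
  let ddT : Derivation R (Polynomial (MvPolynomial σ R)) (Polynomial (MvPolynomial σ R)) :=
    Polynomial.derivative'.restrictScalars R
  let coeffwise : Derivation R (Polynomial (MvPolynomial σ R)) (Polynomial (MvPolynomial σ R)) :=
    PolynomialModule.equivPolynomialSelf.toLinearMap.compDer (mkDerivation R h).mapCoeffs
  have hgen (i : σ) : ddT (Polynomial.C (X i) + Polynomial.X * Polynomial.C (h i)) =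
      coeffwise (Polynomial.C (X i) + Polynomial.X * Polynomial.C (h i)) := by
    simp [ddT, coeffwise, hh]
  exact congrArg (fun q => q.coeff m) (derivation_aeval_eq_of_eq_on_generators hgen f)

theorem substAlong_eq_C [CommRing R] [IsAddTorsionFree R] {h : σ → MvPolynomial σ R}
    (hh : ∀ j, mkDerivation R h (h j) = 0) {f : MvPolynomial σ R}
    (hf : mkDerivation R h f = 0) : substAlong h f = Polynomial.C f := by
  have hconst := eq_C_of_coeff_derivative_eq (map_zero (mkDerivation R h))
    (coeff_derivative_substAlong hh f) (by rwa [coeff_zero_substAlong])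
  rwa [coeff_zero_substAlong] at hconst

end SubstAlong

theorem stmt10_general {R σ : Type*} [CommRing R] [IsAddTorsionFree R]
    (h : σ → MvPolynomial σ R) (hh : ∀ j, mkDerivation R h (h j) = 0)
    (f : MvPolynomial σ R) (hf : mkDerivation R h f = 0) (c : MvPolynomial σ R) :
    aeval (fun i => X i + c * h i) f = f ∧
      ∀ p : σ → R, eval (fun i => p i + eval p c * eval p (h i)) f = eval p f := by
  have hpoly : aeval (fun i => X i + c * h i) f = f := by
    rw [← eval_substAlong, substAlong_eq_C hh hf, Polynomial.eval_C]
  refine ⟨hpoly, fun p => ?_⟩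
  simpa only [eval_aeval_eq_eval, map_add, map_mul, eval_X] using congrArg (eval p) hpoly

/-- If `h₀, …, hₙ` satisfy `∑ i, hᵢ · ∂hⱼ/∂xᵢ = 0` for all `j`, then
`hⱼ(x + λ·h(x)) = hⱼ(x)` as polynomial identities, and in particular
`hⱼ(p + λ·h(p)) = hⱼ(p)` for every point `p ∈ k^{n+1}`: each fiber of the map
`h = (h₀, …, hₙ)` over a point `q` is a cone through `q`. -/
theorem stmt10 {k : Type*} [Field k] [CharZero k] (n : ℕ)
    (h : Fin (n + 1) → MvPolynomial (Fin (n + 1)) k)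
    (hrel : ∀ j, ∑ i, h i * pderiv i (h j) = 0) :
    ∀ (j : Fin (n + 1)) (lam : k),
      aeval (fun i => X i + C lam * h i) (h j) = h j ∧
      ∀ p : Fin (n + 1) → k,
        eval (fun i => p i + lam * eval p (h i)) (h j) = eval p (h j) := by
  simp only [← mkDerivation_apply_eq_sum] at hrel
  exact fun j lam => by simpa only [eval_C] using stmt10_general h hrel (h j) (hrel j) (C lam)
end

section
/- Let k be a field of characteristic zero and let f ∈ k[x_0,…,x_n] be a homogeneous polynomial. Then the Hessian polynomial h_f of f is identically zero if and only if the partial derivatives f_0 = ∂f/∂x_0, …, f_n = ∂f/∂x_n are algebraically dependent over k, i.e. if and only if the family (f_0,…,f_n) is not algebraically independent over k. -/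
open MvPolynomial

/-!
In characteristic zero, polynomials `g_j` in as many variables are algebraically independent iff
their Jacobian determinant is nonzero; the theorem is the case `g_j = ∂f/∂x_j`.

If the determinant is nonzero, the chain rule shows that the partial derivatives of a polynomial
relation between the `g_j` are again relations, so descending in degree yields a nonzero constant
relation, which is absurd. Conversely, a nonzero vector `w` in the left kernel of the Jacobian
matrix gives a nonzero derivation `∑ w_i ∂/∂x_i` killing every `g_j`. If the `g_j` were
algebraically independent, they would form a transcendence basis, and a derivation killing a
transcendence basis is zero.
-/

section PartialDerivatives

variable {σ R : Type*}

theorem totalDegree_pderiv_le [CommSemiring R] (i : σ) (p : MvPolynomial σ R) :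
    (pderiv i p).totalDegree ≤ p.totalDegree - 1 := by
  refine Finset.sup_le fun s hs => ?_
  have hmem : s + Finsupp.single i 1 ∈ p.support := by
    rw [mem_support_iff, coeff_pderiv] at hs
    exact mem_support_iff.mpr (left_ne_zero_of_mul hs)
  have hle : (s + Finsupp.single i 1).degree ≤ p.totalDegree := le_totalDegree hmem
  rw [map_add, Finsupp.degree_single] at hle
  exact Nat.le_sub_one_of_lt hle

theorem eq_C_of_pderiv_eq_zero [CommRing R] [IsAddTorsionFree R] {p : MvPolynomial σ R}
    (hp : ∀ i, pderiv i p = 0) : p = C (constantCoeff p) := by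
  refine MvPolynomial.coe_injective _ _ (MvPowerSeries.pderiv.ext (fun i => ?_) ?_)
  · rw [MvPowerSeries.pderiv_coe, MvPowerSeries.pderiv_coe, hp, pderiv_C]
  · rw [← MvPowerSeries.coeff_zero_eq_constantCoeff_apply,
      ← MvPowerSeries.coeff_zero_eq_constantCoeff_apply, coeff_coe, coeff_coe, coeff_zero_C,
      constantCoeff_eq]

theorem eq_zero_of_mem_of_pderiv_mem [CommRing R] [IsAddTorsionFree R]
    {S : Set (MvPolynomial σ R)} (hpderiv : ∀ p ∈ S, ∀ i, pderiv i p ∈ S)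
    (hC : ∀ a, C a ∈ S → a = 0) {p : MvPolynomial σ R} (hp : p ∈ S) : p = 0 := by
  induction hdeg : p.totalDegree using Nat.strong_induction_on generalizing p with
  | _ d ih =>
    have eq_zero_of_eq_C {a : R} (ha : p = C a) : p = 0 := by
      rw [ha, hC a (ha ▸ hp), C_0]
    rcases Nat.eq_zero_or_pos d with rfl | hd
    · exact eq_zero_of_eq_C (totalDegree_eq_zero_iff_eq_C.mp hdeg)
    · refine eq_zero_of_eq_C (eq_C_of_pderiv_eq_zero fun i => ih _ ?_ (hpderiv p hp i) rfl)
      have := totalDegree_pderiv_le i p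
      lia

end PartialDerivatives

section ChainRule

variable {ι R A : Type*} [Fintype ι] [CommRing R]

theorem derivation_map_aeval [CommRing A] [Algebra R A] {M : Type*} [AddCommGroup M] [Module A M]
    [Module R M] (D : Derivation R A M) (g : ι → A) (p : MvPolynomial ι R) :
    D (aeval g p) = ∑ j, aeval g (pderiv j p) • D (g j) := by
  classical
  induction p using MvPolynomial.induction_on with
  | C a => simp
  | add p q hp hq => simp [hp, hq, add_smul, Finset.sum_add_distrib]
  | mul_X p i hp =>
    simp [hp, pderiv_X, Pi.single_apply, apply_ite, ite_smul, add_smul, mul_smul,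
      Finset.sum_add_distrib, Finset.smul_sum]

theorem algebraicIndependent_of_det_derivation_ne_zero [DecidableEq ι] [IsAddTorsionFree R]
    [CommRing A] [IsDomain A] [Algebra R A] [FaithfulSMul R A] (D : ι → Derivation R A A)
    (g : ι → A) (hdet : (Matrix.of fun i j => D i (g j)).det ≠ 0) : AlgebraicIndependent R g := by
  rw [algebraicIndependent_iff]
  refine fun p hp => eq_zero_of_mem_of_pderiv_mem (S := {p | aeval g p = 0}) ?_ ?_ hp
  · intro q hq
    have hmulVec : (Matrix.of fun i j => D i (g j)).mulVec (fun j => aeval g (pderiv j q)) = 0 := by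
      funext i
      calc ∑ j, D i (g j) * aeval g (pderiv j q)
          = D i (aeval g q) := by simp [derivation_map_aeval, mul_comm]
        _ = 0 := by rw [hq, map_zero]
    exact congrFun (Matrix.eq_zero_of_mulVec_eq_zero hdet hmulVec)
  · intro a ha
    rwa [Set.mem_ofPred_eq, aeval_C, FaithfulSMul.algebraMap_eq_zero_iff] at ha

end ChainRule

section Constants

theorem exists_aeval_eq_zero_and_aeval_derivative_ne_zero {R A : Type*} [CommRing R]
    [IsAddTorsionFree R] [Ring A] [Algebra R A] [FaithfulSMul R A] {x : A}
    (hx : IsAlgebraic R x) :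
    ∃ p : Polynomial R, Polynomial.aeval x p = 0 ∧ Polynomial.aeval x p.derivative ≠ 0 := by
  obtain ⟨p, hp, hpx⟩ := hx
  induction hdeg : p.natDegree using Nat.strong_induction_on generalizing p with
  | _ d ih =>
    by_cases hderiv : Polynomial.aeval x p.derivative = 0
    · have hd : p.natDegree ≠ 0 := by
        intro hd
        rw [Polynomial.eq_C_of_natDegree_eq_zero hd] at hp hpx
        rw [Polynomial.aeval_C, FaithfulSMul.algebraMap_eq_zero_iff] at hpx
        exact hp (by rw [hpx, Polynomial.C_0])
      exact ih _ (hdeg ▸ Polynomial.natDegree_derivative_lt hd) p.derivative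
        (mt Polynomial.derivative_eq_zero.mp hd) hderiv rfl
    · exact ⟨p, hpx, hderiv⟩

variable {R A M : Type*} [CommRing R] [CommRing A] [Algebra R A] [AddCommGroup M] [Module A M]
  [Module R M]

/-- The ring of constants of a derivation `D`, i.e. its kernel, as a subalgebra of the source. -/
def derivationConstants (D : Derivation R A M) : Subalgebra R A where
  carrier := {a | D a = 0}
  mul_mem' {a b} (ha : D a = 0) (hb : D b = 0) := by simp [ha, hb]
  add_mem' {a b} (ha : D a = 0) (hb : D b = 0) := by simp [ha, hb]
  algebraMap_mem' := D.map_algebraMap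

/-- A derivation regarded as a derivation over its ring of constants, over which it is linear. -/
def derivationOverConstants (D : Derivation R A M) : Derivation (derivationConstants D) A M where
  toFun := D
  map_add' := map_add D
  map_smul' c a := by
    have hc : D c = 0 := c.2
    simp [Subalgebra.smul_def, hc]
  map_one_eq_zero' := D.map_one_eq_zero
  leibniz' := D.leibniz

variable [IsDomain A] [CharZero A] [Module.IsTorsionFree A M]

theorem mem_derivationConstants_of_isAlgebraic (D : Derivation R A M) {x : A}
    (hx : IsAlgebraic (derivationConstants D) x) : x ∈ derivationConstants D := by
  obtain ⟨p, hpx, hderiv⟩ := exists_aeval_eq_zero_and_aeval_derivative_ne_zero hx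
  have hsmul : Polynomial.aeval x p.derivative • D x = 0 := by
    calc Polynomial.aeval x p.derivative • D x
        = derivationOverConstants D (Polynomial.aeval x p) :=
          ((derivationOverConstants D).map_aeval p x).symm
      _ = 0 := by rw [hpx, map_zero]
  exact (smul_eq_zero.mp hsmul).resolve_left hderiv

theorem derivation_eq_zero_of_isTranscendenceBasis {ι : Type*} {g : ι → A}
    (hg : IsTranscendenceBasis R g) {D : Derivation R A M} (hD : ∀ i, D (g i) = 0) : D = 0 := by
  have hadjoin : Algebra.adjoin R (Set.range g) ≤ derivationConstants D :=
    Algebra.adjoin_le (Set.range_subset_iff.mpr hD)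
  have := (algebraMap R A).domain_nontrivial
  have halg := hg.isAlgebraic
  ext x
  exact mem_derivationConstants_of_isAlgebraic D
    ((halg.isAlgebraic x).tower_top_of_subalgebra_le hadjoin)

end Constants

section Jacobian

variable {σ R : Type*} [CommRing R]

/-- The Jacobian matrix of a family of polynomials, with rows indexed by the variables and columns
by the members of the family (the transpose of the usual convention), so that the Hessian matrix of
`f` is literally the Jacobian matrix of its partial derivatives. -/
noncomputable def jacobianMatrix {ι : Type*} (g : ι → MvPolynomial σ R) :
    Matrix σ ι (MvPolynomial σ R) :=
  Matrix.of fun i j => pderiv i (g j)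

theorem isTranscendenceBasis_of_algebraicIndependent [Finite σ] [IsDomain R]
    {g : σ → MvPolynomial σ R}
    (hg : AlgebraicIndependent R g) : IsTranscendenceBasis R g :=
  hg.isTranscendenceBasis_of_lift_trdeg_le_of_finite (by simp [MvPolynomial.trdeg_of_isDomain])

variable [Fintype σ]

theorem mkDerivation_apply_eq_vecMul_jacobianMatrix {ι : Type*} (w : σ → MvPolynomial σ R)
    (g : ι → MvPolynomial σ R) (j : ι) :
    mkDerivation R w (g j) = (Matrix.vecMul w (jacobianMatrix g)) j := by
  have h := derivation_map_aeval (mkDerivation R w) X (g j)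
  simpa [Matrix.vecMul, dotProduct, jacobianMatrix, mul_comm] using h

variable [DecidableEq σ] [IsDomain R] [CharZero R]

theorem det_jacobianMatrix_ne_zero_of_algebraicIndependent {g : σ → MvPolynomial σ R}
    (hg : AlgebraicIndependent R g) : (jacobianMatrix g).det ≠ 0 := by
  intro hdet
  obtain ⟨w, hw_ne, hw⟩ := Matrix.exists_vecMul_eq_zero_iff.mpr hdet
  have hD : mkDerivation R w = 0 :=
    derivation_eq_zero_of_isTranscendenceBasis (isTranscendenceBasis_of_algebraicIndependent hg)
      fun j => by rw [mkDerivation_apply_eq_vecMul_jacobianMatrix, hw, Pi.zero_apply]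
  refine hw_ne (funext fun i => ?_)
  rw [← mkDerivation_X R w i, hD, Derivation.zero_apply, Pi.zero_apply]

theorem algebraicIndependent_iff_det_jacobianMatrix_ne_zero {g : σ → MvPolynomial σ R} :
    AlgebraicIndependent R g ↔ (jacobianMatrix g).det ≠ 0 :=
  ⟨det_jacobianMatrix_ne_zero_of_algebraicIndependent,
    algebraicIndependent_of_det_derivation_ne_zero pderiv g⟩

end Jacobian

theorem hessianDet_eq_det_jacobianMatrix {R : Type*} [CommRing R] {m : ℕ}
    (f : MvPolynomial (Fin m) R) :
    hessianDet f = (jacobianMatrix fun i => pderiv i f).det :=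
  rfl

theorem stmt14_general {R : Type*} [CommRing R] [IsDomain R] [CharZero R] {m : ℕ}
    (f : MvPolynomial (Fin m) R) :
    hessianDet f = 0 ↔ ¬ AlgebraicIndependent R (fun i => pderiv i f) := by
  rw [algebraicIndependent_iff_det_jacobianMatrix_ne_zero, not_ne_iff,
    hessianDet_eq_det_jacobianMatrix]

/-- Proposition 2.4 of the paper: the Hessian polynomial of a homogeneous polynomial `f`
vanishes identically iff the partial derivatives of `f` are algebraically dependent
over `k`. -/
theorem stmt14 {k : Type*} [Field k] [CharZero k] (n d : ℕ)
    (f : MvPolynomial (Fin (n + 1)) k) (hhom : f.IsHomogeneous d) :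
    hessianDet f = 0 ↔ ¬ AlgebraicIndependent k (fun i => pderiv i f) :=
  stmt14_general f
end

section
/- Let k be a field of characteristic zero and let f := x_0·x_3² + 2·x_1·x_3·x_4 + x_2·x_4² ∈ k[x_0, x_1, x_2, x_3, x_4]. Then: (i) the Hessian polynomial h_f of f, the determinant of the 5×5 matrix of second partial derivatives of f, is identically zero; and (ii) the five partial derivatives ∂f/∂x_0,…,∂f/∂x_4 are linearly independent over k, so that V(f) ⊂ P^4 is not a cone. Hence f is a counterexample to Hesse's claim in P^4. -/
open MvPolynomial

/-!
The cubic is linear in `x₀, x₁, x₂`, so its Hessian matrix has a `3 × 3` block of zeros. A block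
of that size in a `5 × 5` matrix meets every permutation, so every term of the Leibniz expansion
vanishes. For the linear independence, a relation between the partial derivatives says that a
constant vector is orthogonal to the gradient at every point, and the gradients at five
well-chosen points already force that vector to be zero.
-/

theorem det_eq_zero_of_zero_block {n R : Type*} [Fintype n] [DecidableEq n] [CommRing R]
    {A : Matrix n n R} {s t : Finset n} (hcard : Fintype.card n < s.card + t.card)
    (hA : ∀ i ∈ s, ∀ j ∈ t, A i j = 0) : A.det = 0 := by
  rw [Matrix.det_apply]
  refine Finset.sum_eq_zero fun σ _ => ?_
  obtain ⟨i, hi⟩ : (s ∩ t.map σ.toEmbedding).Nonempty :=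
    Finset.inter_nonempty_of_card_lt_card_add_card s.subset_univ (Finset.subset_univ _)
      (by rwa [Finset.card_map])
  obtain ⟨his, hit⟩ := Finset.mem_inter.mp hi
  obtain ⟨j, hjt, rfl⟩ := Finset.mem_map.mp hit
  have prod_eq_zero : ∏ j, A (σ j) j = 0 :=
    Finset.prod_eq_zero (Finset.mem_univ j) (hA _ his j hjt)
  rw [prod_eq_zero, smul_zero]

theorem hessianDet_eq_zero_of_zero_block {k : Type*} [CommRing k] {m : ℕ}
    {f : MvPolynomial (Fin m) k} {s : Finset (Fin m)} (hs : m < 2 * s.card)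
    (hf : ∀ i ∈ s, ∀ j ∈ s, pderiv i (pderiv j f) = 0) : hessianDet f = 0 :=
  det_eq_zero_of_zero_block (by rwa [Fintype.card_fin, ← two_mul]) hf

theorem sum_mul_eval_eq_zero {k σ ι : Type*} [CommSemiring k] [Fintype ι]
    {p : ι → MvPolynomial σ k} {c : ι → k} (hc : ∑ i, c i • p i = 0) (v : σ → k) :
    ∑ i, c i * eval v (p i) = 0 := by
  simpa only [map_sum, smul_eval, map_zero] using congrArg (eval v) hc

theorem pderiv_ofNat {k σ : Type*} [CommSemiring k] (i : σ) (n : ℕ) [n.AtLeastTwo] :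
    pderiv i (ofNat(n) : MvPolynomial σ k) = 0 :=
  (pderiv i).map_natCast n

/-- The Gordan–Noether cubic `x₀x₃² + 2x₁x₃x₄ + x₂x₄²`, with coefficients in an arbitrary
commutative ring. -/
noncomputable def gordanNoetherCubic (k : Type*) [CommRing k] : MvPolynomial (Fin 5) k :=
  X 0 * X 3 ^ 2 + 2 * X 1 * X 3 * X 4 + X 2 * X 4 ^ 2

section gordanNoetherCubic

variable {k : Type*} [CommRing k]

theorem pderiv_gordanNoetherCubic (i : Fin 5) :
    pderiv i (gordanNoetherCubic k) =
      ![X 3 ^ 2, 2 * X 3 * X 4, X 4 ^ 2,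
        2 * (X 0 * X 3 + X 1 * X 4), 2 * (X 1 * X 3 + X 2 * X 4)] i := by
  fin_cases i <;>
    simp [gordanNoetherCubic, pderiv_X, pderiv_ofNat, Derivation.leibniz_pow] <;> ring

theorem hessianDet_gordanNoetherCubic : hessianDet (gordanNoetherCubic k) = 0 := by
  refine hessianDet_eq_zero_of_zero_block (s := {0, 1, 2}) (by decide) fun i hi j hj => ?_
  rw [pderiv_gordanNoetherCubic]
  fin_cases hi <;> fin_cases hj <;> simp [pderiv_X, pderiv_ofNat, Derivation.leibniz_pow]

theorem sum_mul_eval_pderiv_gordanNoetherCubic (c v : Fin 5 → k) :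
    ∑ i, c i * eval v (pderiv i (gordanNoetherCubic k)) =
      c 0 * v 3 ^ 2 + c 1 * (2 * v 3 * v 4) + c 2 * v 4 ^ 2 +
        c 3 * (2 * (v 0 * v 3 + v 1 * v 4)) + c 4 * (2 * (v 1 * v 3 + v 2 * v 4)) := by
  simp [Fin.sum_univ_five, pderiv_gordanNoetherCubic]

theorem linearIndependent_pderiv_gordanNoetherCubic (two_mem : (2 : k) ∈ nonZeroDivisors k) :
    LinearIndependent k fun i => pderiv i (gordanNoetherCubic k) := by
  rw [Fintype.linearIndependent_iff]
  intro c hc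
  have orthogonal (v : Fin 5 → k) :=
    (sum_mul_eval_pderiv_gordanNoetherCubic c v).symm.trans (sum_mul_eval_eq_zero hc v)
  have eq_zero_of_mul_two {a : k} : a * 2 = 0 → a = 0 :=
    (mul_right_mem_nonZeroDivisors_eq_zero_iff two_mem).mp
  have c0 : c 0 = 0 := by simpa using orthogonal ![0, 0, 0, 1, 0]
  have c2 : c 2 = 0 := by simpa using orthogonal ![0, 0, 0, 0, 1]
  have c1 : c 1 = 0 := eq_zero_of_mul_two <| by simpa [c0, c2] using orthogonal ![0, 0, 0, 1, 1]
  have c3 : c 3 = 0 := eq_zero_of_mul_two <| by simpa [c0] using orthogonal ![1, 0, 0, 1, 0]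
  have c4 : c 4 = 0 := eq_zero_of_mul_two <| by simpa [c2] using orthogonal ![0, 0, 1, 0, 1]
  intro i
  fin_cases i <;> assumption

end gordanNoetherCubic

theorem stmt16_general {k : Type*} [CommRing k] (two_mem : (2 : k) ∈ nonZeroDivisors k)
    (f : MvPolynomial (Fin 5) k)
    (hf : f = X 0 * X 3 ^ 2 + 2 * X 1 * X 3 * X 4 + X 2 * X 4 ^ 2) :
    hessianDet f = 0 ∧
      ∀ c : Fin 5 → k, ∑ i, c i • pderiv i f = 0 → c = 0 := by
  obtain rfl : f = gordanNoetherCubic k := hf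
  exact ⟨hessianDet_gordanNoetherCubic, fun c hc => funext <|
    Fintype.linearIndependent_iff.mp (linearIndependent_pderiv_gordanNoetherCubic two_mem) c hc⟩

/-- The Gordan–Noether cubic `f = x₀x₃² + 2x₁x₃x₄ + x₂x₄²` in `ℙ⁴` has identically
vanishing Hessian, yet its five partial derivatives are linearly independent over `k`,
so `V(f)` is not a cone: a counterexample to Hesse's claim. -/
theorem stmt16 {k : Type*} [Field k] [CharZero k]
    (f : MvPolynomial (Fin 5) k)
    (hf : f = X 0 * X 3 ^ 2 + 2 * X 1 * X 3 * X 4 + X 2 * X 4 ^ 2) :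
    hessianDet f = 0 ∧
      ∀ c : Fin 5 → k, ∑ i, c i • pderiv i f = 0 → c = 0 :=
  stmt16_general (mem_nonZeroDivisors_of_ne_zero two_ne_zero) f hf
end

section
/- Let k be an algebraically closed field of characteristic zero. Fix integers n ≥ 4, 2 ≤ t ≤ n−2 and 1 ≤ m ≤ n−t−1 with t ≥ m+1. Let h_0,…,h_t ∈ k[y_0,…,y_m] be homogeneous polynomials all of the same degree, let ψ_0,…,ψ_m ∈ k[x_{t+1},…,x_n] be homogeneous polynomials all of the same degree, and let a^{(ℓ)}_{u,v} ∈ k be scalars for ℓ = 1,…,t−m, u = 1,…,t−m−1, v = 0,…,t. For ℓ = 1,…,t−m define Q_ℓ ∈ k[x_0,…,x_n] as the determinant of the (t+1)×(t+1) matrix whose first row is (x_0,…,x_t), whose next m+1 rows are, for j = 0,…,m, the row ((∂h_0/∂y_j)(ψ_0,…,ψ_m), …, (∂h_t/∂y_j)(ψ_0,…,ψ_m)) obtained by substituting y_j ↦ ψ_j into the partial derivatives of the h_i, and whose last t−m−1 rows are the constant rows (a^{(ℓ)}_{u,0},…,a^{(ℓ)}_{u,t}). Let s ≥ 1 be the common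 degree of the Q_ℓ, fix an integer d > s, set μ = ⌊d/s⌋, and for k' = 0,…,μ let P_{k'} ∈ k[z_1,…,z_{t−m}, x_{t+1},…,x_n] be a biform that is homogeneous of degree k' in z_1,…,z_{t−m} and homogeneous of degree d − k'·s in x_{t+1},…,x_n. Then the polynomial f := Σ_{k'=0}^{μ} P_{k'}(Q_1,…,Q_{t−m}, x_{t+1},…,x_n) ∈ k[x_0,…,x_n], a form of degree d, has identically vanishing Hessian polynomial h_f. -/
open MvPolynomial

/-!
Let `w = (h₀(ψ), …, h_t(ψ))`. By Euler's identity `e • w` is a combination of the Jacobian rows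
`(∂h₀/∂yⱼ(ψ), …, ∂h_t/∂yⱼ(ψ))`, and by the chain rule so is every partial derivative of `w`.
Each `Q_ℓ` is linear in `x₀, …, x_t` and its gradient in these variables is a column of cofactors,
hence orthogonal to the Jacobian rows; the same then holds for the gradient of `f`. So the vector
field `∑ e wᵥ ∂/∂xᵥ` and all the derivatives of its coefficients annihilate `f`, and
differentiating `∑ e wᵥ ∂f/∂xᵥ = 0` shows that `e • w` is in the kernel of the Hessian matrix.
If `e • w = 0`, then either all `Q_ℓ` vanish and so do the derivatives `∂f/∂xᵥ`, or the Jacobian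
rows are linearly independent, which forces `ψ = 0`, and a (constant) Jacobian row takes the place
of `e • w`.
-/

section Homogeneity

variable {R σ τ : Type*} [CommSemiring R]

theorem isHomogeneous_aeval_of_isWeightedHomogeneous {w : σ → ℕ} {d : ℕ} {p : MvPolynomial σ R}
    (hp : IsWeightedHomogeneous w p d) {g : σ → MvPolynomial τ R}
    (hg : ∀ i, (g i).IsHomogeneous (w i)) : (aeval g p).IsHomogeneous d := by
  rw [aeval_def, eval₂_eq]
  refine IsHomogeneous.sum _ _ _ fun c hc => ?_
  have hmonomial : (∏ i ∈ c.support, g i ^ c i).IsHomogeneous (∑ i ∈ c.support, w i * c i) :=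
    IsHomogeneous.prod _ _ _ fun i _ => (hg i).pow (c i)
  have hweight : ∑ i ∈ c.support, w i * c i = d := by
    rw [← hp (mem_support_iff.mp hc), Finsupp.weight_apply]
    exact Finset.sum_congr rfl fun i _ => mul_comm _ _
  exact (hweight ▸ hmonomial).C_mul _

theorem isWeightedHomogeneous_sumElim_of_bihomogeneous {p : MvPolynomial (σ ⊕ τ) R} {a b : ℕ}
    (hσ : IsWeightedHomogeneous (Sum.elim (fun _ => 1) fun _ => 0) p a)
    (hτ : IsWeightedHomogeneous (Sum.elim (fun _ => 0) fun _ => 1) p b) (s : ℕ) :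
    IsWeightedHomogeneous (Sum.elim (fun _ => s) fun _ => 1) p (a * s + b) := by
  intro c hc
  rw [← hσ hc, ← hτ hc]
  simp only [Finsupp.weight_apply, Finsupp.sum, Finset.sum_mul, ← Finset.sum_add_distrib]
  refine Finset.sum_congr rfl fun i _ => ?_
  cases i <;> simp

end Homogeneity

section Derivations

variable {k A : Type*} [CommRing k] [CommRing A] [Algebra k A] (D : Derivation k A A)

theorem derivation_aeval {σ : Type*} [Fintype σ] (g : σ → A) (p : MvPolynomial σ k) :
    D (aeval g p) = ∑ j, aeval g (pderiv j p) * D (g j) := by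
  classical
  induction p using MvPolynomial.induction_on with
  | C c => simp
  | add p q hp hq => simp [hp, hq, add_mul, Finset.sum_add_distrib]
  | mul_X p i hp =>
    simp only [map_mul, aeval_X, Derivation.leibniz, hp, smul_eq_mul, map_add, add_mul,
      Finset.sum_add_distrib, Finset.mul_sum]
    congr 1
    · simp [pderiv_X, Pi.single_apply, Finset.sum_ite_eq]
    · exact Finset.sum_congr rfl fun j _ => by ring

variable {D}

theorem derivation_aeval_eq_zero {σ : Type*} {g : σ → A} (hg : ∀ j, D (g j) = 0)
    (p : MvPolynomial σ k) : D (aeval g p) = 0 := by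
  induction p using MvPolynomial.induction_on with
  | C c => simp
  | add p q hp hq => rw [map_add, map_add, hp, hq, add_zero]
  | mul_X p i hp => simp [hp, hg]

variable {τ : Type*} [Fintype τ] [DecidableEq τ] {M : Matrix τ τ A}

theorem derivation_det_eq_zero (hM : ∀ i j, D (M i j) = 0) : D M.det = 0 := by
  have hgeneric : M.det = aeval (fun p : τ × τ => M p.1 p.2) (Matrix.mvPolynomialX τ τ k).det := by
    rw [AlgHom.map_det, Matrix.mvPolynomialX_mapMatrix_aeval]
  rw [hgeneric, derivation_aeval_eq_zero fun p : τ × τ => hM p.1 p.2]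

theorem derivation_det_eq_sum_mul_adjugate {r₀ : τ} (hM : ∀ r ≠ r₀, ∀ v, D (M r v) = 0) :
    D M.det = ∑ v, D (M r₀ v) * M.adjugate v r₀ := by
  have hadjugate (v : τ) : D (M.adjugate v r₀) = 0 := by
    rw [Matrix.adjugate_apply]
    refine derivation_det_eq_zero fun r j => ?_
    obtain rfl | hr := eq_or_ne r r₀
    · obtain rfl | hj := eq_or_ne j v <;> simp [*]
    · rw [Matrix.updateRow_ne hr, hM r hr]
  rw [Matrix.det_eq_sum_mul_adjugate_row M r₀, map_sum]
  exact Finset.sum_congr rfl fun v _ => by simp [hadjugate, mul_comm]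

end Derivations

theorem row_dotProduct_adjugate_eq_zero {τ A : Type*} [Fintype τ] [DecidableEq τ] [CommRing A]
    (M : Matrix τ τ A) {r r₀ : τ} (hr : r ≠ r₀) : M r ⬝ᵥ (fun v => M.adjugate v r₀) = 0 := by
  calc M r ⬝ᵥ (fun v => M.adjugate v r₀) = (M * M.adjugate) r r₀ := rfl
    _ = 0 := by simp [M.mul_adjugate, hr]

theorem dotProduct_eq_zero_of_mem_span {τ κ A : Type*} [Fintype τ] [CommRing A]
    {R : κ → τ → A} {g : τ → A} (hg : ∀ j, R j ⬝ᵥ g = 0) {u : τ → A}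
    (hu : u ∈ Submodule.span A (Set.range R)) : u ⬝ᵥ g = 0 := by
  induction hu using Submodule.span_induction with
  | mem _ hu => obtain ⟨j, rfl⟩ := hu; exact hg j
  | zero => exact zero_dotProduct g
  | add u v _ _ hu hv => rw [add_dotProduct, hu, hv, add_zero]
  | smul c u _ hu => rw [smul_dotProduct, hu, smul_zero]

theorem hessianDet_eq_zero_of_dotProduct_pderiv_eq_zero {k τ : Type*} [CommRing k] [IsDomain k]
    [Fintype τ] {N : ℕ} {x : τ → Fin N} (hx : Function.Injective x) {f : MvPolynomial (Fin N) k}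
    {w : τ → MvPolynomial (Fin N) k} (hw : w ≠ 0)
    (hwf : w ⬝ᵥ (fun v => pderiv (x v) f) = 0)
    (hdwf : ∀ i, (fun v => pderiv i (w v)) ⬝ᵥ (fun v => pderiv (x v) f) = 0) :
    hessianDet f = 0 := by
  by_contra hdet
  have hcols := (Matrix.linearIndependent_cols_of_det_ne_zero hdet).comp x hx
  refine hw (funext (Fintype.linearIndependent_iff.mp hcols w (funext fun i => ?_)))
  calc (∑ v, w v • fun i => pderiv i (pderiv (x v) f)) i
      = ∑ v, w v * pderiv i (pderiv (x v) f) := by simp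
    _ = pderiv i (w ⬝ᵥ fun v => pderiv (x v) f)
          - (fun v => pderiv i (w v)) ⬝ᵥ (fun v => pderiv (x v) f) := by
        simp only [dotProduct, map_sum, ← Finset.sum_sub_distrib, Derivation.leibniz, smul_eq_mul]
        exact Finset.sum_congr rfl fun v _ => by ring
    _ = 0 := by rw [hwf, hdwf, map_zero, sub_zero]

section JacobianRows

variable {k σ τ κ : Type*} [CommRing k]

/-- The row `(∂hᵥ/∂yⱼ(ψ))ᵥ` of partial derivatives of the polynomials `hᵥ` with respect to `yⱼ`,
evaluated at `y = ψ`. -/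
noncomputable def jacobianRow (h : τ → MvPolynomial κ k) (ψ : κ → MvPolynomial σ k) (j : κ) :
    τ → MvPolynomial σ k :=
  fun v => aeval ψ (pderiv j (h v))

variable {h : τ → MvPolynomial κ k} {ψ : κ → MvPolynomial σ k}

theorem sum_smul_jacobianRow_eq_nsmul_aeval [Fintype κ] {e : ℕ} (hh : ∀ v, (h v).IsHomogeneous e) :
    ∑ j, ψ j • jacobianRow h ψ j = e • fun v => aeval ψ (h v) := by
  funext v
  simpa [jacobianRow] using congrArg (aeval ψ) (hh v).sum_X_mul_pderiv

theorem pderiv_aeval_eq_sum_smul_jacobianRow [Fintype κ] (i : σ) :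
    (fun v => pderiv i (aeval ψ (h v))) = ∑ j, pderiv i (ψ j) • jacobianRow h ψ j := by
  funext v
  simp only [derivation_aeval, jacobianRow, mul_comm, Finset.sum_apply, Pi.smul_apply, smul_eq_mul]

theorem exists_ne_zero_mem_span_jacobianRow [Nontrivial k] [Finite κ] [Nonempty κ] {e : ℕ}
    (hh : ∀ v, (h v).IsHomogeneous e)
    (hindep : LinearIndependent (MvPolynomial σ k) (jacobianRow h ψ)) :
    ∃ w ≠ 0, w ∈ Submodule.span (MvPolynomial σ k) (Set.range (jacobianRow h ψ)) ∧
      ∀ i, (fun v => pderiv i (w v)) ∈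
        Submodule.span (MvPolynomial σ k) (Set.range (jacobianRow h ψ)) := by
  have := Fintype.ofFinite κ
  set S := Submodule.span (MvPolynomial σ k) (Set.range (jacobianRow h ψ))
  have sum_mem (c : κ → MvPolynomial σ k) : ∑ j, c j • jacobianRow h ψ j ∈ S :=
    S.sum_mem fun j _ => S.smul_mem _ (Submodule.subset_span ⟨j, rfl⟩)
  by_cases hEuler : ∑ j, ψ j • jacobianRow h ψ j = 0
  · have hψ : ψ = 0 := funext (Fintype.linearIndependent_iff.mp hindep ψ hEuler)
    obtain ⟨j⟩ := ‹Nonempty κ›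
    refine ⟨jacobianRow h ψ j, hindep.ne_zero j, Submodule.subset_span ⟨j, rfl⟩, fun i => ?_⟩
    have hconst : (fun v => pderiv i (jacobianRow h ψ j v)) = 0 :=
      funext fun v => derivation_aeval_eq_zero (fun j => by simp [hψ]) (pderiv j (h v))
    exact hconst ▸ S.zero_mem
  · refine ⟨_, hEuler, sum_mem ψ, fun i => ?_⟩
    rw [sum_smul_jacobianRow_eq_nsmul_aeval hh]
    have hderiv := S.smul_of_tower_mem e (sum_mem fun j => pderiv i (ψ j))
    rw [← pderiv_aeval_eq_sum_smul_jacobianRow] at hderiv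
    convert hderiv using 1
    funext v
    simp

end JacobianRows

section GordanNoether

variable {k σ τ κ L : Type*} [CommRing k]

/-- The matrices whose determinants are the `Q_ℓ` of Gordan and Noether: the row `r₀` consists of
the variables `xᵥ`, the distinct rows `ρ j ≠ r₀` are the Jacobian rows of `h` at `ψ`, and no row
other than `r₀` depends on the variables `xᵥ`, in the sense that `∂/∂xᵥ` kills its entries. The
remaining rows, which are constant in the original construction, may thus be arbitrary polynomials
in the other variables. -/
structure IsGordanNoetherMatrix (x : τ → σ) (h : τ → MvPolynomial κ k)
    (ψ : κ → MvPolynomial σ k) (r₀ : τ) (ρ : κ → τ) (M : Matrix τ τ (MvPolynomial σ k)) :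
    Prop where
  row_variables : ∀ v, M r₀ v = X (x v)
  row_jacobian : ∀ j, M (ρ j) = jacobianRow h ψ j
  injective : Function.Injective ρ
  ne : ∀ j, ρ j ≠ r₀
  pderiv_eq_zero : ∀ r ≠ r₀, ∀ v i, pderiv (x i) (M r v) = 0

namespace IsGordanNoetherMatrix

variable [Fintype τ] [DecidableEq τ]
  {x : τ → σ} {h : τ → MvPolynomial κ k} {ψ : κ → MvPolynomial σ k} {r₀ : τ} {ρ : κ → τ}

theorem linearIndependent_jacobianRow [IsDomain k] {M : Matrix τ τ (MvPolynomial σ k)}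
    (hM : IsGordanNoetherMatrix x h ψ r₀ ρ M) (hdet : M.det ≠ 0) :
    LinearIndependent (MvPolynomial σ k) (jacobianRow h ψ) := by
  have hrows : jacobianRow h ψ = M.row ∘ ρ := funext fun j => (hM.row_jacobian j).symm
  exact hrows ▸ (Matrix.linearIndependent_rows_of_det_ne_zero hdet).comp ρ hM.injective

theorem pderiv_det {M : Matrix τ τ (MvPolynomial σ k)} (hM : IsGordanNoetherMatrix x h ψ r₀ ρ M)
    (hx : Function.Injective x) (v : τ) : pderiv (x v) M.det = M.adjugate v r₀ := by
  classical
  rw [derivation_det_eq_sum_mul_adjugate fun r hr u => hM.pderiv_eq_zero r hr u v]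
  simp [hM.row_variables, pderiv_X, Pi.single_apply, hx.eq_iff]

theorem jacobianRow_dotProduct_pderiv_det {M : Matrix τ τ (MvPolynomial σ k)}
    (hM : IsGordanNoetherMatrix x h ψ r₀ ρ M) (hx : Function.Injective x) (j : κ) :
    jacobianRow h ψ j ⬝ᵥ (fun v => pderiv (x v) M.det) = 0 := by
  simp only [hM.pderiv_det hx, ← hM.row_jacobian]
  exact row_dotProduct_adjugate_eq_zero M (hM.ne j)

end IsGordanNoetherMatrix

theorem pderiv_aeval_sumElim_X [Fintype L] [Finite σ] {i : σ} {P : MvPolynomial (L ⊕ σ) k}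
    (hP : pderiv (Sum.inr i) P = 0) (Q : L → MvPolynomial σ k) :
    pderiv i (aeval (Sum.elim Q X) P) =
      ∑ ℓ, aeval (Sum.elim Q X) (pderiv (Sum.inl ℓ) P) * pderiv i (Q ℓ) := by
  classical
  have := Fintype.ofFinite σ
  rw [derivation_aeval, Fintype.sum_sum_type]
  simp [pderiv_X, Pi.single_apply, hP]

theorem hessianDet_aeval_det_eq_zero [IsDomain k] [Fintype τ] [DecidableEq τ] [Finite κ]
    [Nonempty κ] [Finite L] {N : ℕ} {x : τ → Fin N} (hx : Function.Injective x) {e : ℕ}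
    {h : τ → MvPolynomial κ k} (hh : ∀ v, (h v).IsHomogeneous e)
    {ψ : κ → MvPolynomial (Fin N) k} {r₀ : τ} {ρ : κ → τ}
    {M : L → Matrix τ τ (MvPolynomial (Fin N) k)}
    (hM : ∀ ℓ, IsGordanNoetherMatrix x h ψ r₀ ρ (M ℓ)) {P : MvPolynomial (L ⊕ Fin N) k}
    (hP : ∀ v, pderiv (Sum.inr (x v)) P = 0) :
    hessianDet (aeval (Sum.elim (fun ℓ => (M ℓ).det) X) P) = 0 := by
  have := Fintype.ofFinite L
  set Q := fun ℓ => (M ℓ).det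
  set f := aeval (Sum.elim Q X) P
  have hgrad (v : τ) : pderiv (x v) f =
      ∑ ℓ, aeval (Sum.elim Q X) (pderiv (Sum.inl ℓ) P) * pderiv (x v) (Q ℓ) :=
    pderiv_aeval_sumElim_X (hP v) Q
  by_cases hQ : ∃ ℓ, Q ℓ ≠ 0
  · obtain ⟨ℓ, hℓ⟩ := hQ
    obtain ⟨w, hw, hwS, hdwS⟩ :=
      exists_ne_zero_mem_span_jacobianRow hh ((hM ℓ).linearIndependent_jacobianRow hℓ)
    have horth (j : κ) : jacobianRow h ψ j ⬝ᵥ (fun v => pderiv (x v) f) = 0 := by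
      calc jacobianRow h ψ j ⬝ᵥ (fun v => pderiv (x v) f)
          = ∑ ℓ, aeval (Sum.elim Q X) (pderiv (Sum.inl ℓ) P) *
              (jacobianRow h ψ j ⬝ᵥ fun v => pderiv (x v) (Q ℓ)) := by
            simp only [hgrad, dotProduct, Finset.mul_sum]
            rw [Finset.sum_comm]
            simp only [mul_left_comm]
        _ = 0 := Finset.sum_eq_zero fun ℓ _ => by
            rw [(hM ℓ).jacobianRow_dotProduct_pderiv_det hx, mul_zero]
    exact hessianDet_eq_zero_of_dotProduct_pderiv_eq_zero hx hw
      (dotProduct_eq_zero_of_mem_span horth hwS)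
      fun i => dotProduct_eq_zero_of_mem_span horth (hdwS i)
  · push Not at hQ
    have : Nonempty τ := ⟨r₀⟩
    exact hessianDet_eq_zero_of_dotProduct_pderiv_eq_zero hx (w := 1) one_ne_zero
      (by simp [dotProduct, hgrad, hQ]) (by simp [dotProduct, hgrad, hQ])

end GordanNoether

section GordanNoetherMatrix

variable {k σ : Type*} [CommRing k] {t m : ℕ}

/-- The matrix of Gordan and Noether with rows `(x₀, …, x_t)`, then the `m + 1` Jacobian rows of
`h` at `ψ`, then the `t - m - 1` rows of constants `a u`. It has this shape only if `m + 1 ≤ t`. -/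
noncomputable def gordanNoetherMatrix (x : Fin (t + 1) → σ)
    (h : Fin (t + 1) → MvPolynomial (Fin (m + 1)) k) (ψ : Fin (m + 1) → MvPolynomial σ k)
    (a : Fin (t - m - 1) → Fin (t + 1) → k) :
    Matrix (Fin (t + 1)) (Fin (t + 1)) (MvPolynomial σ k) :=
  Matrix.of fun r v =>
    if (r : ℕ) = 0 then X (x v)
    else if hr : (r : ℕ) < m + 2 then aeval ψ (pderiv ⟨(r : ℕ) - 1, by omega⟩ (h v))
    else C (a ⟨(r : ℕ) - (m + 2), by omega⟩ v)

theorem isGordanNoetherMatrix_gordanNoetherMatrix (hmt : m + 1 ≤ t) {x : Fin (t + 1) → σ}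
    (h : Fin (t + 1) → MvPolynomial (Fin (m + 1)) k) {ψ : Fin (m + 1) → MvPolynomial σ k}
    (hψ : ∀ j v, pderiv (x v) (ψ j) = 0) (a : Fin (t - m - 1) → Fin (t + 1) → k) :
    IsGordanNoetherMatrix x h ψ 0 (fun j => (Fin.castLE hmt j).succ)
      (gordanNoetherMatrix x h ψ a) where
  row_variables v := by simp [gordanNoetherMatrix]
  row_jacobian j := by
    funext v
    have hj : (j : ℕ) + 1 < m + 2 := by omega
    simp [gordanNoetherMatrix, jacobianRow, hj]
  injective := (Fin.succ_injective t).comp (Fin.castLE_injective hmt)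
  ne j := Fin.succ_ne_zero _
  pderiv_eq_zero r hr v i := by
    simp only [gordanNoetherMatrix, Matrix.of_apply, Fin.val_eq_zero_iff, hr, if_false]
    split_ifs
    · exact derivation_aeval_eq_zero (fun j => hψ j i) _
    · exact pderiv_C

end GordanNoetherMatrix

theorem stmt17_general {k τ κ L : Type*} [CommRing k] [IsDomain k] [Fintype τ] [DecidableEq τ]
    [Finite κ] [Nonempty κ] [Finite L] {N : ℕ} {x : τ → Fin N} (hx : Function.Injective x)
    {e : ℕ} {h : τ → MvPolynomial κ k} (hh : ∀ v, (h v).IsHomogeneous e)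
    {ψ : κ → MvPolynomial (Fin N) k} {r₀ : τ} {ρ : κ → τ}
    {M : L → Matrix τ τ (MvPolynomial (Fin N) k)}
    (hM : ∀ ℓ, IsGordanNoetherMatrix x h ψ r₀ ρ (M ℓ))
    {Q : L → MvPolynomial (Fin N) k} (hQ : ∀ ℓ, Q ℓ = (M ℓ).det)
    {s : ℕ} (hQhom : ∀ ℓ, (Q ℓ).IsHomogeneous s)
    {d : ℕ} {P : MvPolynomial (L ⊕ Fin N) k} (hPx : ∀ v, pderiv (Sum.inr (x v)) P = 0)
    (hPhom : IsWeightedHomogeneous (Sum.elim (fun _ => s) fun _ => 1) P d) :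
    (aeval (Sum.elim Q X) P).IsHomogeneous d ∧ hessianDet (aeval (Sum.elim Q X) P) = 0 := by
  constructor
  · refine isHomogeneous_aeval_of_isWeightedHomogeneous hPhom ?_
    rintro (ℓ | i)
    exacts [hQhom ℓ, isHomogeneous_X k i]
  · obtain rfl : Q = fun ℓ => (M ℓ).det := funext hQ
    exact hessianDet_aeval_det_eq_zero hx hh hM hPx

/-- Every Gordan–Noether polynomial of type `(n, t, m, s)` is a form of degree `d`
with identically vanishing Hessian (Proposition 4.4 of the paper). Here the `ψⱼ`
are forms in the variables `x_{t+1}, …, x_n` only (encoded by the vanishing of the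
partial derivatives with respect to the first `t+1` variables), `Q_ℓ` is the
determinant of the `(t+1) × (t+1)` matrix whose first row is `(x₀, …, x_t)`, whose
next `m+1` rows are the rows `(∂h₀/∂y_j(ψ), …, ∂h_t/∂y_j(ψ))`, and whose last
`t-m-1` rows are rows of constants `a⁽ˡ⁾_{u,v}`, and the `P_{k'}` are biforms of
bidegree `(k', d - k'·s)` in `(z₁, …, z_{t-m}; x_{t+1}, …, x_n)`. -/
theorem stmt17 {k : Type*} [Field k] [IsAlgClosed k] [CharZero k]
    (n t m : ℕ) (hn : 4 ≤ n) (ht2 : 2 ≤ t) (htn : t ≤ n - 2)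
    (hm1 : 1 ≤ m) (hmn : m ≤ n - t - 1) (htm : m + 1 ≤ t)
    (eh : ℕ) (h : Fin (t + 1) → MvPolynomial (Fin (m + 1)) k)
    (hhhom : ∀ i, (h i).IsHomogeneous eh)
    (epsi : ℕ) (ψ : Fin (m + 1) → MvPolynomial (Fin (n + 1)) k)
    (hψhom : ∀ j, (ψ j).IsHomogeneous epsi)
    (hψvars : ∀ j, ∀ i : Fin (n + 1), (i : ℕ) ≤ t → pderiv i (ψ j) = 0)
    (a : Fin (t - m) → Fin (t - m - 1) → Fin (t + 1) → k)
    (Q : Fin (t - m) → MvPolynomial (Fin (n + 1)) k)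
    (hQ : ∀ ℓ, Q ℓ = Matrix.det (Matrix.of fun r v : Fin (t + 1) =>
      if (r : ℕ) = 0 then
        X (⟨(v : ℕ), by have := v.isLt; omega⟩ : Fin (n + 1))
      else if hr : (r : ℕ) < m + 2 then
        aeval ψ (pderiv (⟨(r : ℕ) - 1, by omega⟩ : Fin (m + 1)) (h v))
      else
        C (a ℓ (⟨(r : ℕ) - (m + 2), by have := r.isLt; omega⟩ : Fin (t - m - 1)) v)))
    (s : ℕ) (hs : 1 ≤ s) (hQhom : ∀ ℓ, (Q ℓ).IsHomogeneous s)
    (d : ℕ) (hds : s < d)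
    (P : Fin (d / s + 1) → MvPolynomial (Fin (t - m) ⊕ Fin (n + 1)) k)
    (hPvars : ∀ k', ∀ i : Fin (n + 1), (i : ℕ) ≤ t → pderiv (Sum.inr i) (P k') = 0)
    (hPbihom : ∀ k' : Fin (d / s + 1),
      IsWeightedHomogeneous (Sum.elim (fun _ => 1) (fun _ => 0)) (P k') ((k' : ℕ)) ∧
      IsWeightedHomogeneous (Sum.elim (fun _ => 0) (fun _ => 1)) (P k')
        (d - (k' : ℕ) * s))
    (f : MvPolynomial (Fin (n + 1)) k)
    (hf : f = ∑ k' : Fin (d / s + 1), aeval (Sum.elim Q X) (P k')) :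
    f.IsHomogeneous d ∧ hessianDet f = 0 := by
  have hle (k' : Fin (d / s + 1)) : (k' : ℕ) * s ≤ d :=
    (Nat.mul_le_mul_right s k'.is_le).trans (Nat.div_mul_le_self d s)
  have hPhom : IsWeightedHomogeneous (Sum.elim (fun _ => s) fun _ => 1) (∑ k', P k') d :=
    .sum _ _ _ fun k' _ => Nat.add_sub_of_le (hle k') ▸
      isWeightedHomogeneous_sumElim_of_bihomogeneous (hPbihom k').1 (hPbihom k').2 s
  rw [hf, ← map_sum]
  exact stmt17_general (Fin.castLE_injective (by omega : t + 1 ≤ n + 1)) hhhom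
    (fun ℓ => isGordanNoetherMatrix_gordanNoetherMatrix htm h
      (fun j v => hψvars j _ v.is_le) (a ℓ))
    hQ hQhom (fun v => by simp [hPvars _ (Fin.castLE _ v) v.is_le]) hPhom
end
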